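/- arXiv:0908.4024 — 4 statements merged into one kernel-verified Lean document; each statement's English description precedes it below -/
import Mathlib

section
/- Let L be a positive integer, let φ_1, …, φ_L be entire functions, let ζ_1, …, ζ_L be complex numbers, let σ_1, …, σ_L be nonnegative integers, and let r, R be real numbers with 0 < r ≤ R and |ζ_μ| ≤ r for 1 ≤ μ ≤ L. Let Δ be the determinant of the L × L matrix whose (λ, μ) entry is the σ_μ-th derivative of φ_λ evaluated at ζ_μ. Then |Δ| ≤ (R/r)^{−L(L−1)/2 + σ_1 + ⋯ + σ_L} · L! · ∏_{λ=1}^{L} max_{1 ≤ μ ≤ L} sup_{|z| = R} |(d/dz)^{σ_μ} φ_λ(z)|. -/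
/-- `sup_{|z| = R} |(d/dz)^σ φ(z)|`. -/
noncomputable def SupDerivOnCircle (σ : ℕ) (φ : ℂ → ℂ) (R : ℝ) : ℝ :=
  sSup ((fun z => ‖iteratedDeriv σ φ z‖) '' {z : ℂ | ‖z‖ = R})

/-!
Put `Ψ(z) = det (φ_λ^(σ_μ) (z ζ_μ))`, so that `Δ = Ψ(1)`. Differentiating column by column shows
that `Ψ'` is a linear combination of determinants of the same shape, each with one of the orders
`σ_μ` raised by one. At `z = 0` such a determinant has two equal columns as soon as two orders
coincide, hence whenever the orders add up to less than `0 + 1 + ⋯ + (L - 1)`. So `Ψ` vanishes at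
`0` to order at least `L (L - 1) / 2 - ∑ σ_μ`, and the Schwarz lemma on the disc of radius `R / r`
yields the power of `R / r`.
-/

open Filter Finset Metric Topology

lemma choose_two_card_le_sum_of_injective {ι : Type*} [Fintype ι] {f : ι → ℕ}
    (hf : Function.Injective f) : (Fintype.card ι).choose 2 ≤ ∑ i, f i := by
  have hg : Function.Injective fun i => (f i : ℤ) := Nat.cast_injective.comp hf
  have h := sum_range_le_sum (s := univ.image fun i => (f i : ℤ)) (c := 0) (by simp)
  rw [card_image_of_injective _ hg, sum_image hg.injOn, card_univ] at h
  simp only [zero_add] at h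
  rw [← Nat.cast_sum, ← Nat.cast_sum, Nat.cast_le, sum_range_id, ← Nat.choose_two_right] at h
  exact h

lemma inv_pow_tsub_le_rpow {x : ℝ} (hx : 1 ≤ x) (m n : ℕ) :
    x⁻¹ ^ (m - n) ≤ x ^ (-(m : ℝ) + n) := by
  have h : (m : ℝ) ≤ (m - n : ℕ) + n := by exact_mod_cast le_tsub_add
  rw [inv_pow, ← Real.rpow_natCast, ← Real.rpow_neg (by linarith)]
  exact Real.rpow_le_rpow_of_exponent_le hx (by linarith)

section Det

variable {ι : Type*} [Fintype ι] [DecidableEq ι]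

lemma norm_det_le_factorial_mul_prod {𝔸 : Type*} [NormedCommRing 𝔸] [NormOneClass 𝔸]
    {A : Matrix ι ι 𝔸} {b : ι → ℝ} (hA : ∀ i j, ‖A i j‖ ≤ b i) :
    ‖A.det‖ ≤ (Fintype.card ι).factorial * ∏ i, b i := by
  rw [← Matrix.det_transpose, Matrix.det_apply]
  calc ‖∑ τ : Equiv.Perm ι, Equiv.Perm.sign τ • ∏ i, A i (τ i)‖
      ≤ ∑ τ : Equiv.Perm ι, ‖∏ i, A i (τ i)‖ :=
        norm_sum_le_of_le _ fun τ _ => (norm_units_zsmul _ _).le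
    _ ≤ ∑ _τ : Equiv.Perm ι, ∏ i, b i :=
        sum_le_sum fun τ _ => (Finset.norm_prod_le _ _).trans <|
          prod_le_prod (fun _ _ => norm_nonneg _) fun i _ => hA i (τ i)
    _ = (Fintype.card ι).factorial * ∏ i, b i := by simp [Fintype.card_perm]

variable {𝕜 𝔸 : Type*} [NontriviallyNormedField 𝕜] [NormedCommRing 𝔸] [NormedAlgebra 𝕜 𝔸]

lemma hasDerivAt_det {A : 𝕜 → Matrix ι ι 𝔸} {A' : Matrix ι ι 𝔸} {z : 𝕜}
    (hA : ∀ i j, HasDerivAt (fun w => A w i j) (A' i j) z) :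
    HasDerivAt (fun w => (A w).det) (∑ j, ((A z).updateCol j fun i => A' i j).det) z := by
  have hprod (τ : Equiv.Perm ι) (j : ι) : ∏ k, (A z).updateCol j (fun i => A' i j) (τ k) k =
      (∏ k ∈ univ.erase j, A z (τ k) k) • A' (τ j) j := by
    rw [← prod_erase_mul _ _ (mem_univ j), Matrix.updateCol_self, smul_eq_mul]
    congr 1
    exact prod_congr rfl fun k hk => Matrix.updateCol_ne (ne_of_mem_erase hk)
  simp only [Matrix.det_apply', hprod]
  rw [sum_comm]
  simp only [← mul_sum]
  exact .fun_sum fun τ _ => (HasDerivAt.fun_finsetProd fun k _ => hA (τ k) k).const_mul _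

lemma analyticAt_det {A : 𝕜 → Matrix ι ι 𝔸} {z : 𝕜}
    (hA : ∀ i j, AnalyticAt 𝕜 (fun w => A w i j) z) : AnalyticAt 𝕜 (fun w => (A w).det) z := by
  simp only [Matrix.det_apply']
  exact Finset.analyticAt_fun_sum _ fun τ _ =>
    analyticAt_const.mul (Finset.analyticAt_fun_prod _ fun k _ => hA (τ k) k)

end Det

lemma analyticAt_iteratedDeriv {𝕜 F : Type*} [NontriviallyNormedField 𝕜] [NormedAddCommGroup F]
    [NormedSpace 𝕜 F] [CompleteSpace F] {f : 𝕜 → F} {z : 𝕜} (hf : AnalyticAt 𝕜 f z) (n : ℕ) :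
    AnalyticAt 𝕜 (iteratedDeriv n f) z := by
  simpa only [iteratedDeriv_eq_iterate] using hf.iterated_deriv n

section InterpolationDet

variable {ι 𝕜 : Type*} [Fintype ι] [DecidableEq ι] [NontriviallyNormedField 𝕜]
  {φ : ι → 𝕜 → 𝕜} {ζ : ι → 𝕜} {σ : ι → ℕ} {z : 𝕜}

/-- The interpolation determinant of the functions `φ i` at the dilated nodes `z * ζ j`, with
derivatives of order `σ j`. The determinant of interest is its value at `z = 1`; letting `z` vary
turns the estimate of that value into a question about a function of one variable. -/
noncomputable def interpolationDet (φ : ι → 𝕜 → 𝕜) (ζ : ι → 𝕜) (σ : ι → ℕ) (z : 𝕜) : 𝕜 :=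
  (Matrix.of fun i j => iteratedDeriv (σ j) (φ i) (z * ζ j)).det

lemma interpolationDet_zero_of_not_injective (hσ : ¬ Function.Injective σ) :
    interpolationDet φ ζ σ 0 = 0 := by
  obtain ⟨j, k, hjk, hne⟩ := Function.not_injective_iff.1 hσ
  exact Matrix.det_zero_of_column_eq hne fun i => by simp [hjk]

variable [CompleteSpace 𝕜]

lemma analyticAt_interpolationDet (hφ : ∀ i j, AnalyticAt 𝕜 (φ i) (z * ζ j)) :
    AnalyticAt 𝕜 (interpolationDet φ ζ σ) z :=
  analyticAt_det fun i j =>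
    (analyticAt_iteratedDeriv (hφ i j) (σ j)).comp (f := fun w => w * ζ j) (by fun_prop)

lemma deriv_interpolationDet (hφ : ∀ i j, AnalyticAt 𝕜 (φ i) (z * ζ j)) :
    deriv (interpolationDet φ ζ σ) z =
      ∑ j, ζ j * interpolationDet φ ζ (σ + Pi.single j 1) z := by
  have hentry (i j) : HasDerivAt (fun w => iteratedDeriv (σ j) (φ i) (w * ζ j))
      (ζ j * iteratedDeriv (σ j + 1) (φ i) (z * ζ j)) z := by
    have h := (analyticAt_iteratedDeriv (hφ i j) (σ j)).differentiableAt.hasDerivAt.comp z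
      (hasDerivAt_mul_const (ζ j))
    rwa [← iteratedDeriv_succ, mul_comm] at h
  let A (w : 𝕜) : Matrix ι ι 𝕜 := Matrix.of fun i j => iteratedDeriv (σ j) (φ i) (w * ζ j)
  refine (hasDerivAt_det (A := A) hentry).deriv.trans (sum_congr rfl fun j _ => ?_)
  refine (Matrix.det_updateCol_smul (A z) j (ζ j)
    fun i => iteratedDeriv (σ j + 1) (φ i) (z * ζ j)).trans ?_
  rw [interpolationDet]
  congr 2
  ext i k
  rcases eq_or_ne k j with rfl | hk
  · simp
  · simp [A, hk]

lemma iteratedDeriv_interpolationDet_zero (hφ : ∀ i, AnalyticAt 𝕜 (φ i) 0) {n : ℕ}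
    (hn : n + ∑ j, σ j < (Fintype.card ι).choose 2) :
    iteratedDeriv n (interpolationDet φ ζ σ) 0 = 0 := by
  induction n generalizing σ with
  | zero =>
    rw [iteratedDeriv_zero]
    exact interpolationDet_zero_of_not_injective fun hσ =>
      (choose_two_card_le_sum_of_injective hσ).not_gt (by simpa using hn)
  | succ n ih =>
    have hderiv : deriv (interpolationDet φ ζ σ) =ᶠ[𝓝 0]
        fun z => ∑ j, ζ j * interpolationDet φ ζ (σ + Pi.single j 1) z := by
      have hφ' : ∀ᶠ z in 𝓝 (0 : 𝕜), ∀ i j, AnalyticAt 𝕜 (φ i) (z * ζ j) := by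
        refine eventually_all.2 fun i => eventually_all.2 fun j => ?_
        have : Tendsto (fun z => z * ζ j) (𝓝 0) (𝓝 0) :=
          Continuous.tendsto' (by fun_prop) _ _ (zero_mul _)
        exact this.eventually (hφ i).eventually_analyticAt
      exact hφ'.mono fun z hz => deriv_interpolationDet hz
    have hsum (j : ι) : n + ∑ k, (σ + Pi.single j 1 : ι → ℕ) k < (Fintype.card ι).choose 2 := by
      simpa [sum_add_distrib, ← add_assoc, add_right_comm] using hn
    have hcont (j : ι) : ContDiffAt 𝕜 n (interpolationDet φ ζ (σ + Pi.single j 1)) 0 :=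
      (analyticAt_interpolationDet fun i k => by simpa using hφ i).contDiffAt
    rw [iteratedDeriv_succ', hderiv.iteratedDeriv_eq,
      iteratedDeriv_fun_sum fun j _ => contDiffAt_const.mul (hcont j)]
    exact sum_eq_zero fun j _ => by rw [iteratedDeriv_const_mul_field, ih (hsum j), mul_zero]

lemma choose_two_sub_le_analyticOrderAt_interpolationDet [CharZero 𝕜]
    (hφ : ∀ i, AnalyticAt 𝕜 (φ i) 0) :
    ((Fintype.card ι).choose 2 - ∑ j, σ j : ℕ) ≤ analyticOrderAt (interpolationDet φ ζ σ) 0 := by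
  rw [natCast_le_analyticOrderAt_iff_iteratedDeriv_eq_zero
    (analyticAt_interpolationDet fun i j => by simpa using hφ i)]
  exact fun n hn => iteratedDeriv_interpolationDet_zero hφ (by lia)

end InterpolationDet

lemma isLittleO_pow_of_lt_analyticOrderAt {𝕜 E : Type*} [NontriviallyNormedField 𝕜]
    [NormedAddCommGroup E] [NormedSpace 𝕜 E] {f : 𝕜 → E} {c : 𝕜} {n : ℕ}
    (hn : n < analyticOrderAt f c) : f =o[𝓝 c] fun w => (w - c) ^ n := by
  have hf : AnalyticAt 𝕜 f c := (analyticOrderAt_ne_zero.1 hn.ne_bot).1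
  obtain ⟨g, hg, hfg⟩ := (natCast_le_analyticOrderAt hf).1 (Order.add_one_le_of_lt hn)
  have hsmall : (fun w => (w - c) • g w) =o[𝓝 c] fun _ => (1 : 𝕜) := by
    refine (Asymptotics.isLittleO_one_iff 𝕜).2 ?_
    have : ContinuousAt (fun w => (w - c) • g w) c := by fun_prop
    simpa using this.tendsto
  refine ((Asymptotics.isBigO_refl (fun w => (w - c) ^ n) (𝓝 c)).smul_isLittleO hsmall).congr'
    (hfg.mono fun w hw => ?_) (.of_forall fun w => by simp)
  rw [hw, pow_succ, mul_smul]

lemma norm_le_mul_div_pow_of_le_analyticOrderAt {F : Type*} [NormedAddCommGroup F]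
    [NormedSpace ℂ F] {f : ℂ → F} {c z : ℂ} {R C : ℝ} {n : ℕ} (hR : R ≠ 0)
    (hf : DifferentiableOn ℂ f (ball c R)) (hC : ∀ w ∈ closedBall c R, ‖f w‖ ≤ C)
    (hn : n ≤ analyticOrderAt f c) (hz : z ∈ closedBall c R) :
    ‖f z‖ ≤ C * (‖z - c‖ / R) ^ n := by
  rcases (mem_closedBall.1 hz).eq_or_lt with hz_sphere | hz_ball
  · simpa [← dist_eq_norm, hz_sphere, hR] using hC z hz
  cases n with
  | zero => simpa using hC z hz
  | succ n =>
    have hn' : n < analyticOrderAt f c := (Nat.cast_lt.2 n.lt_succ_self).trans_le hn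
    have hfc : f c = 0 := apply_eq_zero_of_analyticOrderAt_ne_zero hn'.ne_bot
    have hlittleO : (f · - f c) =o[𝓝 c] fun w => ‖w - c‖ ^ n := by
      simpa [hfc] using (isLittleO_pow_of_lt_analyticOrderAt hn').norm_right
    have := Complex.dist_le_mul_div_pow_of_mapsTo_ball_of_isLittleO hf
      (fun w hw => by simpa [hfc] using hC w (ball_subset_closedBall hw)) hlittleO
      (mem_ball.2 hz_ball)
    simpa [hfc, dist_eq_norm] using this

lemma norm_iteratedDeriv_le_supDerivOnCircle {f : ℂ → ℂ} {R : ℝ} {z : ℂ} (hR : R ≠ 0)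
    (hf : AnalyticOnNhd ℂ f (closedBall 0 R)) (n : ℕ) (hz : z ∈ closedBall 0 R) :
    ‖iteratedDeriv n f z‖ ≤ SupDerivOnCircle n f R := by
  have hdiff : DifferentiableOn ℂ (iteratedDeriv n f) (closedBall 0 R) := fun w hw =>
    (analyticAt_iteratedDeriv (hf w hw) n).differentiableAt.differentiableWithinAt
  have hbdd : BddAbove ((fun w => ‖iteratedDeriv n f w‖) '' sphere 0 R) :=
    ((isCompact_sphere 0 R).image_of_continuousOn
      (hdiff.continuousOn.norm.mono sphere_subset_closedBall)).bddAbove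
  refine Complex.norm_le_of_forall_mem_frontier_norm_le isBounded_ball
    (hdiff.mono closure_ball_subset_closedBall).diffContOnCl (fun w hw => ?_)
    (by rwa [closure_ball _ hR])
  rw [frontier_ball _ hR] at hw
  refine le_csSup (by simpa [sphere] using hbdd) ⟨w, ?_, rfl⟩
  simpa using hw

lemma norm_interpolationDet_le_mul_div_pow {ι : Type*} [Fintype ι] [DecidableEq ι]
    {φ : ι → ℂ → ℂ} {ζ : ι → ℂ} {σ : ι → ℕ} {r R : ℝ} {b : ι → ℝ} {z : ℂ} (hr : 0 < r)
    (hR : 0 < R) (hφ : ∀ i, AnalyticOnNhd ℂ (φ i) (closedBall 0 R)) (hζ : ∀ j, ‖ζ j‖ ≤ r)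
    (hb : ∀ i j, ∀ w ∈ closedBall 0 R, ‖iteratedDeriv (σ j) (φ i) w‖ ≤ b i)
    (hz : z ∈ closedBall 0 (R / r)) :
    ‖interpolationDet φ ζ σ z‖ ≤ (Fintype.card ι).factorial * (∏ i, b i) *
      (‖z‖ / (R / r)) ^ ((Fintype.card ι).choose 2 - ∑ j, σ j) := by
  have hmem (w) (hw : w ∈ closedBall (0 : ℂ) (R / r)) (j) : w * ζ j ∈ closedBall 0 R := by
    rw [mem_closedBall_zero_iff] at hw ⊢
    calc ‖w * ζ j‖ ≤ R / r * r := norm_mul_le_of_le hw (hζ j)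
      _ = R := div_mul_cancel₀ R hr.ne'
  have hdiff : DifferentiableOn ℂ (interpolationDet φ ζ σ) (ball 0 (R / r)) := fun w hw =>
    (analyticAt_interpolationDet fun i j =>
      hφ i _ (hmem w (ball_subset_closedBall hw) j)).differentiableAt.differentiableWithinAt
  have hbound (w) (hw : w ∈ closedBall (0 : ℂ) (R / r)) :
      ‖interpolationDet φ ζ σ w‖ ≤ (Fintype.card ι).factorial * ∏ i, b i :=
    norm_det_le_factorial_mul_prod fun i j => hb i j _ (hmem w hw j)
  have horder := choose_two_sub_le_analyticOrderAt_interpolationDet (ζ := ζ) (σ := σ)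
    fun i => hφ i 0 (mem_closedBall_self hR.le)
  simpa only [sub_zero] using
    norm_le_mul_div_pow_of_le_analyticOrderAt (div_pos hR hr).ne' hdiff hbound horder hz

theorem interpolation_determinant_bound_general {ι : Type*} [Fintype ι] [DecidableEq ι]
    [Nonempty ι] {φ : ι → ℂ → ℂ} {ζ : ι → ℂ} {σ : ι → ℕ} {r R : ℝ} (hr : 0 < r) (hrR : r ≤ R)
    (hφ : ∀ i, AnalyticOnNhd ℂ (φ i) (closedBall 0 R)) (hζ : ∀ j, ‖ζ j‖ ≤ r) :
    ‖(Matrix.of fun i j => iteratedDeriv (σ j) (φ i) (ζ j)).det‖ ≤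
      (R / r) ^ (-(Fintype.card ι : ℝ) * ((Fintype.card ι : ℝ) - 1) / 2 + ∑ j, (σ j : ℝ)) *
        (Fintype.card ι).factorial *
        ∏ i, univ.sup' univ_nonempty fun j => SupDerivOnCircle (σ j) (φ i) R := by
  have hR : 0 < R := hr.trans_le hrR
  have hone : 1 ≤ R / r := (one_le_div hr).2 hrR
  let b (i : ι) : ℝ := univ.sup' univ_nonempty fun j => SupDerivOnCircle (σ j) (φ i) R
  have hb (i j) (w) (hw : w ∈ closedBall 0 R) : ‖iteratedDeriv (σ j) (φ i) w‖ ≤ b i :=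
    (norm_iteratedDeriv_le_supDerivOnCircle hR.ne' (hφ i) (σ j) hw).trans
      (le_sup' (fun j => SupDerivOnCircle (σ j) (φ i) R) (mem_univ j))
  have hb_nonneg (i) : 0 ≤ b i :=
    (norm_nonneg _).trans (hb i (Classical.arbitrary ι) 0 (mem_closedBall_self hR.le))
  have hexp : -(Fintype.card ι : ℝ) * ((Fintype.card ι : ℝ) - 1) / 2 + ∑ j, (σ j : ℝ) =
      -((Fintype.card ι).choose 2 : ℝ) + (∑ j, σ j : ℕ) := by
    rw [Nat.cast_choose_two, Nat.cast_sum, neg_mul, neg_div]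
  rw [mul_assoc, mul_comm, hexp]
  calc ‖(Matrix.of fun i j => iteratedDeriv (σ j) (φ i) (ζ j)).det‖
      ≤ (Fintype.card ι).factorial * (∏ i, b i) *
          (R / r)⁻¹ ^ ((Fintype.card ι).choose 2 - ∑ j, σ j) := by
        simpa [interpolationDet] using
          norm_interpolationDet_le_mul_div_pow (z := 1) hr hR hφ hζ hb (by simpa using hone)
    _ ≤ (Fintype.card ι).factorial * (∏ i, b i) *
          (R / r) ^ (-((Fintype.card ι).choose 2 : ℝ) + (∑ j, σ j : ℕ)) :=
        mul_le_mul_of_nonneg_left (inv_pow_tsub_le_rpow hone _ _) <|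
          mul_nonneg (Nat.cast_nonneg _) (prod_nonneg fun i _ => hb_nonneg i)

/-- **Upper bound for interpolation determinants.** Let `φ₁, …, φ_L` be entire
functions, `ζ₁, …, ζ_L` complex numbers with `|ζ_μ| ≤ r`, `σ₁, …, σ_L`
nonnegative integers, and `0 < r ≤ R`. Then the determinant
`Δ = det((d/dz)^{σ_μ} φ_λ (ζ_μ))` satisfies
`|Δ| ≤ (R/r)^{-L(L-1)/2 + σ₁+⋯+σ_L} · L! · ∏_λ max_μ sup_{|z|=R} |(d/dz)^{σ_μ} φ_λ(z)|`. -/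
theorem interpolation_determinant_bound
    (L : ℕ) (hL : 0 < L)
    (φ : Fin L → ℂ → ℂ) (hφ : ∀ lam, Differentiable ℂ (φ lam))
    (ζ : Fin L → ℂ) (σ : Fin L → ℕ)
    (r R : ℝ) (hr : 0 < r) (hrR : r ≤ R)
    (hζ : ∀ μ, ‖ζ μ‖ ≤ r) :
    ‖Matrix.det (Matrix.of fun lam μ : Fin L =>
        iteratedDeriv (σ μ) (φ lam) (ζ μ))‖ ≤
      (R / r) ^ (-(L : ℝ) * ((L : ℝ) - 1) / 2 + ∑ μ, (σ μ : ℝ)) *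
        (Nat.factorial L) *
        ∏ lam, (Finset.univ.sup'
          (⟨⟨0, hL⟩, Finset.mem_univ _⟩ : (Finset.univ : Finset (Fin L)).Nonempty)
          fun μ => SupDerivOnCircle (σ μ) (φ lam) R) := by
  have : Nonempty (Fin L) := ⟨⟨0, hL⟩⟩
  simpa only [Fintype.card_fin] using
    interpolation_determinant_bound_general hr hrR (fun i z _ => (hφ i).analyticAt z) hζ
end

section
/- Let L and n be positive integers, let N, U, V, R, r be positive real numbers, and let φ_1, …, φ_L be entire functions on ℂ^n. Set W = N + U + V and assume W ≥ 12 n², e ≤ R/r ≤ e^{W/6}, Σ_{λ=1}^{L} |φ_λ|_R ≤ e^U, and (2W)^{n+1} ≤ L N (log(R/r))^n. Then there exist rational integers p_1, …, p_L with 0 < max_{1 ≤ λ ≤ L} |p_λ| ≤ e^N such that the function F = p_1 φ_1 + ⋯ + p_L φ_L satisfies |F|_r ≤ e^{−V}. -/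
/-- `|f|_R`: supremum of `|f z|` over the polydisc `max_i |z_i| ≤ R`. -/
noncomputable def PolydiscSup (n : ℕ) (f : (Fin n → ℂ) → ℂ) (R : ℝ) : ℝ :=
  sSup ((fun z => ‖f z‖) '' {z : Fin n → ℂ | ∀ i, ‖z i‖ ≤ R})

/-!
Dirichlet's box principle, applied to the real and imaginary parts of the Taylor coefficients whose
indices are all smaller than `T`, yields integers `p_λ` for which these coefficients of
`F = ∑ p_λ φ_λ` are tiny. On the polydisc of radius `r` the remaining terms of the Taylor series
are at most about `n (r / R) ^ T |F|_R`, by Cauchy's estimates. Choosing `T log (R / r)` between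
`W + 2n` and `4W / 3` makes this tail smaller than `e ^ (-V)` while leaving fewer boxes than
coefficient vectors.
-/

open Metric Set

section ProductSeries

lemma hasSum_prod_apply {𝕜 α : Type*} [RCLike 𝕜] {n : ℕ} {f : Fin n → α → 𝕜} {s : Fin n → 𝕜}
    (hf : ∀ i, HasSum (f i) (s i)) :
    HasSum (fun k : Fin n → α => ∏ i, f i (k i)) (∏ i, s i) := by
  induction n with
  | zero => simp
  | succ n ih =>
    have htail := ih fun i => hf i.succ
    have hmul := summable_mul_of_summable_norm (hf 0).summable.norm htail.summable.norm
    have hprod := (hf 0).mul htail hmul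
    rw [← (Fin.consEquiv fun _ : Fin (n + 1) => α).hasSum_iff, Fin.prod_univ_succ]
    simpa only [Function.comp_def, Fin.consEquiv, Equiv.coe_fn_mk, Fin.prod_univ_succ,
      Fin.cons_zero, Fin.cons_succ] using hprod

lemma hasSum_geometric_trunc {q : ℝ} (hq : q ≠ 1) (T : ℕ) :
    HasSum (fun j : ℕ => if j < T then q ^ j else 0) ((1 - q ^ T) * (1 - q)⁻¹) := by
  have hfin := hasSum_sum_of_ne_finset_zero (s := Finset.range T) (L := .unconditional _)
    (f := fun j : ℕ => if j < T then q ^ j else 0) fun j hj => if_neg (by simpa using hj)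
  rwa [Finset.sum_congr rfl fun j hj => if_pos (Finset.mem_range.1 hj), geom_sum_eq hq,
    ← neg_div_neg_eq, neg_sub, neg_sub, div_eq_mul_inv] at hfin

lemma hasSum_geometric_off_cube {q : ℝ} (hq0 : 0 ≤ q) (hq1 : q < 1) (n T : ℕ) :
    HasSum (fun k : Fin n → ℕ => if ∀ i, k i < T then 0 else ∏ i, q ^ k i)
      ((1 - (1 - q ^ T) ^ n) * (1 - q)⁻¹ ^ n) := by
  have hall := hasSum_prod_apply fun _ : Fin n => hasSum_geometric_of_lt_one hq0 hq1
  have hcube := hasSum_prod_apply fun _ : Fin n => hasSum_geometric_trunc hq1.ne T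
  simp only [Finset.prod_const, Finset.card_univ, Fintype.card_fin] at hall hcube
  have hdiff := hall.sub hcube
  simp only [Finset.prod_ite_zero, Finset.mem_univ, forall_const, mul_pow, ← one_sub_mul]
    at hdiff
  refine hdiff.congr_fun fun k => ?_
  split_ifs <;> simp

lemma norm_le_of_hasSum_of_cube_bound {E : Type*} [NormedAddCommGroup E] {n T : ℕ} {q δ X : ℝ}
    (hq0 : 0 ≤ q) (hq1 : q < 1) (hδ : 0 ≤ δ) {a : (Fin n → ℕ) → E} {s : E}
    (hcube : ∀ k, (∀ i, k i < T) → ‖a k‖ ≤ δ * ∏ i, q ^ k i)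
    (hall : ∀ k, ‖a k‖ ≤ X * ∏ i, q ^ k i) (hs : HasSum a s) :
    ‖s‖ ≤ (δ + n * q ^ T * X) * (1 - q)⁻¹ ^ n := by
  have hgeom := hasSum_prod_apply fun _ : Fin n => hasSum_geometric_of_lt_one hq0 hq1
  rw [Finset.prod_const, Finset.card_univ, Fintype.card_fin] at hgeom
  have hbound := hs.norm_le_of_bounded
    ((hgeom.mul_left δ).add ((hasSum_geometric_off_cube hq0 hq1 n T).mul_left X)) fun k => by
      have hterm : 0 ≤ ∏ i, q ^ k i := by positivity
      split_ifs with hk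
      · simpa using hcube k hk
      · linarith [hall k, mul_nonneg hδ hterm]
  have hX : 0 ≤ X := by simpa using (norm_nonneg _).trans (hall 0)
  have hbernoulli : 1 - (1 - q ^ T) ^ n ≤ n * q ^ T := by
    have hqT : q ^ T ≤ 1 := pow_le_one₀ hq0 hq1.le
    have := one_add_mul_le_pow (a := -q ^ T) (by linarith) n
    rw [← sub_eq_add_neg] at this
    linarith
  calc ‖s‖ ≤ δ * (1 - q)⁻¹ ^ n + X * ((1 - (1 - q ^ T) ^ n) * (1 - q)⁻¹ ^ n) := hbound
    _ ≤ δ * (1 - q)⁻¹ ^ n + X * (n * q ^ T * (1 - q)⁻¹ ^ n) := by gcongr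
    _ = (δ + n * q ^ T * X) * (1 - q)⁻¹ ^ n := by ring

end ProductSeries

section BoxPrinciple

lemma exists_int_abs_sum_mul_le {ι κ : Type*} [Fintype ι] [Fintype κ]
    (A : κ → ι → ℝ) (P : ℕ) {M η : ℝ} (hη : 0 < η) (hA : ∀ k, ∑ i, |A k i| ≤ M)
    (hcard : (⌊2 * (P * M) / η⌋₊ + 1) ^ Fintype.card κ < (P + 1) ^ Fintype.card ι) :
    ∃ p : ι → ℤ, p ≠ 0 ∧ (∀ i, (p i).natAbs ≤ P) ∧ ∀ k, |∑ i, (p i : ℝ) * A k i| ≤ η := by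
  classical
  let form (p : ι → Fin (P + 1)) (k : κ) : ℝ := ∑ i, (p i : ℝ) * A k i
  have hform : ∀ p k, |form p k| ≤ P * M := fun p k => calc
    |form p k| ≤ ∑ i, |(p i : ℝ) * A k i| := Finset.abs_sum_le_sum_abs _ _
    _ ≤ ∑ i, P * |A k i| := Finset.sum_le_sum fun i _ => by
      rw [abs_mul, Nat.abs_cast]
      gcongr
      exact_mod_cast (p i).is_le
    _ ≤ P * M := by
      rw [← Finset.mul_sum]
      gcongr
      exact hA k
  let box (p : ι → Fin (P + 1)) (k : κ) : Fin (⌊2 * (P * M) / η⌋₊ + 1) :=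
    ⟨⌊(form p k + P * M) / η⌋₊, Nat.lt_succ_of_le <| Nat.floor_mono <| by
      gcongr
      linarith [(abs_le.1 (hform p k)).2]⟩
  obtain ⟨p, p', hne, hbox⟩ := Fintype.exists_ne_map_eq_of_card_lt box (by simpa using hcard)
  refine ⟨fun i => (p i : ℤ) - p' i, fun h => hne ?_, fun i => ?_, fun k => ?_⟩
  · ext i
    have := congrFun h i
    simp only [Pi.zero_apply] at this
    omega
  · have := (p i).is_le
    have := (p' i).is_le
    dsimp only
    omega
  · have hnonneg : ∀ p, 0 ≤ (form p k + P * M) / η := fun p =>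
      div_nonneg (by linarith [(abs_le.1 (hform p k)).1]) hη.le
    have hfloor : ⌊(form p k + P * M) / η⌋ = ⌊(form p' k + P * M) / η⌋ := by
      rw [← Int.natCast_floor_eq_floor (hnonneg p), ← Int.natCast_floor_eq_floor (hnonneg p')]
      exact_mod_cast congrArg Fin.val (congrFun hbox k)
    have hclose := (Int.abs_sub_lt_one_of_floor_eq_floor hfloor).le
    rw [← sub_div, add_sub_add_right_eq_sub, abs_div, abs_of_pos hη, div_le_one hη] at hclose
    simpa only [form, Int.cast_sub, Int.cast_natCast, sub_mul, Finset.sum_sub_distrib] using hclose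

lemma exists_int_norm_sum_mul_le {ι κ : Type*} [Fintype ι] [Fintype κ]
    (A : κ → ι → ℂ) (P : ℕ) {M η : ℝ} (hη : 0 < η) (hA : ∀ k, ∑ i, ‖A k i‖ ≤ M)
    (hcard : (⌊4 * (P * M) / η⌋₊ + 1) ^ (2 * Fintype.card κ) < (P + 1) ^ Fintype.card ι) :
    ∃ p : ι → ℤ, p ≠ 0 ∧ (∀ i, (p i).natAbs ≤ P) ∧ ∀ k, ‖∑ i, (p i : ℂ) * A k i‖ ≤ η := by
  obtain ⟨p, hp0, hpP, hp⟩ := exists_int_abs_sum_mul_le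
    (Sum.elim (fun k i => (A k i).re) (fun k i => (A k i).im)) P (half_pos hη) (M := M)
    (by
      rintro (k | k)
      · exact (Finset.sum_le_sum fun i _ => Complex.abs_re_le_norm (A k i)).trans (hA k)
      · exact (Finset.sum_le_sum fun i _ => Complex.abs_im_le_norm (A k i)).trans (hA k))
    (by
      rwa [Fintype.card_sum, ← two_mul,
        show 2 * (P * M) / (η / 2) = 4 * (P * M) / η by field_simp; ring])
  refine ⟨p, hp0, hpP, fun k => (Complex.norm_le_abs_re_add_abs_im _).trans ?_⟩
  have hre := hp (Sum.inl k)
  have him := hp (Sum.inr k)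
  simp only [Sum.elim_inl, Sum.elim_inr] at hre him
  simp only [Complex.re_sum, Complex.im_sum, Complex.mul_re, Complex.mul_im, Complex.intCast_re,
    Complex.intCast_im, zero_mul, sub_zero, add_zero]
  linarith

end BoxPrinciple

section CauchyIntegral

variable {n : ℕ} {E : Type*} [NormedAddCommGroup E]

/-- The closed polydisc with centre `c` and polyradius `R`, as a product of closed discs. -/
def closedPolydisc (c : Fin n → ℂ) (R : Fin n → ℝ) : Set (Fin n → ℂ) :=
  univ.pi fun i => closedBall (c i) (R i)

lemma torusMap_mem_closedPolydisc {c : Fin n → ℂ} {R : Fin n → ℝ} (hR : ∀ i, 0 ≤ R i)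
    (θ : Fin n → ℝ) : torusMap c R θ ∈ closedPolydisc c R := fun i _ =>
  circleMap_mem_closedBall (c i) (hR i) (θ i)

lemma continuous_torusMap (c : Fin n → ℂ) (R : Fin n → ℝ) : Continuous (torusMap c R) := by
  unfold torusMap
  fun_prop

lemma torusIntegrable_of_continuous_comp {f : (Fin n → ℂ) → E} {c : Fin n → ℂ} {R : Fin n → ℝ}
    (hf : Continuous fun θ => f (torusMap c R θ)) : TorusIntegrable f c R :=
  hf.continuousOn.integrableOn_compact isCompact_Icc

lemma continuous_comp_torusMap {f : (Fin n → ℂ) → E} {c : Fin n → ℂ} {R : Fin n → ℝ}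
    (hR : ∀ i, 0 ≤ R i) (hf : ContinuousOn f (closedPolydisc c R)) :
    Continuous fun θ => f (torusMap c R θ) :=
  hf.comp_continuous (continuous_torusMap c R) (torusMap_mem_closedPolydisc hR)

lemma continuous_torusMap_sub_inv {c z : Fin n → ℂ} {R : Fin n → ℝ} {i : Fin n}
    (hz : z i ∈ ball (c i) (R i)) : Continuous fun θ => (torusMap c R θ i - z i)⁻¹ :=
  (continuous_circleMap_inv hz).comp (continuous_apply i)

variable [NormedSpace ℂ E]

lemma hasSum_torusIntegral_of_summable_bound {ι : Type*} [Countable ι]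
    {F : ι → (Fin n → ℂ) → E} {f : (Fin n → ℂ) → E} {c : Fin n → ℂ} {R : Fin n → ℝ}
    {bound : ι → ℝ} (hF : ∀ k, TorusIntegrable (F k) c R)
    (hle : ∀ k θ, ‖F k (torusMap c R θ)‖ ≤ bound k) (hbound : Summable bound)
    (hsum : ∀ θ, HasSum (fun k => F k (torusMap c R θ)) (f (torusMap c R θ))) :
    HasSum (fun k => ∯ ζ in T(c, R), F k ζ) (∯ ζ in T(c, R), f ζ) := by
  refine MeasureTheory.hasSum_integral_of_dominated_convergence
    (fun k _ => (∏ i, |R i|) * bound k) (fun k => (hF k).function_integrable.1)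
    (fun k => .of_forall fun θ => ?_) (.of_forall fun _ => hbound.mul_left _) ?_
    (.of_forall fun θ => (hsum θ).const_smul _)
  · simpa [norm_smul] using
      mul_le_mul_of_nonneg_left (hle k θ) (by positivity : 0 ≤ ∏ i, |R i|)
  · exact (MeasureTheory.integrableOn_const isCompact_Icc.measure_lt_top.ne)

lemma torusIntegral_prod_sub_inv_smul [CompleteSpace E] {f : (Fin n → ℂ) → E} {c z : Fin n → ℂ}
    {R : Fin n → ℝ} (hf : DifferentiableOn ℂ f (closedPolydisc c R))
    (hz : ∀ i, z i ∈ ball (c i) (R i)) :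
    (∯ ζ in T(c, R), (∏ i, (ζ i - z i)⁻¹) • f ζ) = (2 * Real.pi * Complex.I : ℂ) ^ n • f z := by
  induction n with
  | zero => simp [Subsingleton.elim c z]
  | succ n ih =>
    have hR : ∀ i, 0 ≤ R i := fun i => (pos_of_mem_ball (hz i)).le
    rw [torusIntegral_succ (torusIntegrable_of_continuous_comp
      ((continuous_finsetProd _ fun i _ => continuous_torusMap_sub_inv (hz i)).smul
        (continuous_comp_torusMap hR hf.continuousOn)))]
    have hcons : ∀ w ∈ closedBall (c 0) (R 0), ∀ y ∈ closedPolydisc (Fin.tail c) (Fin.tail R),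
        (Fin.cons w y : Fin (n + 1) → ℂ) ∈ closedPolydisc c R := fun w hw y hy i _ =>
      Fin.cases hw (fun i => hy i (mem_univ i)) i
    have hinner : ∀ w ∈ closedBall (c 0) (R 0),
        (∯ y in T(Fin.tail c, Fin.tail R), (∏ i, (y i - z i.succ)⁻¹) • f (Fin.cons w y)) =
          (2 * Real.pi * Complex.I : ℂ) ^ n • f (Fin.cons w (Fin.tail z)) := fun w hw =>
      ih (f := fun y => f (Fin.cons w y)) (z := Fin.tail z)
        (hf.comp (by fun_prop) (hcons w hw)) fun i => hz i.succ
    have houter : DiffContOnCl ℂ (fun w => f (Fin.cons w (Fin.tail z))) (ball (c 0) (R 0)) :=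
      DifferentiableOn.diffContOnCl_ball (U := closedBall (c 0) (R 0))
        (hf.comp (by fun_prop) fun w hw => hcons w hw _ fun i _ =>
          ball_subset_closedBall (hz i.succ)) subset_rfl
    calc _ = ∮ w in C(c 0, R 0), (2 * Real.pi * Complex.I : ℂ) ^ n •
            ((w - z 0)⁻¹ • f (Fin.cons w (Fin.tail z))) := by
          refine circleIntegral.integral_congr (hR 0) fun w hw => ?_
          simp only [Fin.prod_univ_succ, Fin.cons_zero, Fin.cons_succ, mul_smul,
            torusIntegral_smul]
          rw [smul_comm, ← hinner w (sphere_subset_closedBall hw)]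
          rfl
      _ = (2 * Real.pi * Complex.I : ℂ) ^ (n + 1) • f z := by
          rw [circleIntegral.integral_smul, houter.circleIntegral_sub_inv_smul (hz 0),
            Fin.cons_self_tail, smul_smul, pow_succ]

/-- The Taylor coefficient of `f` at `c` with multi-index `k`, given by Cauchy's integral over the
distinguished boundary of the polydisc of polyradius `R`. Taking the integral as the definition
avoids iterated partial derivatives and makes the coefficient linear in `f`. -/
noncomputable def torusTaylorCoeff (f : (Fin n → ℂ) → E) (c : Fin n → ℂ) (R : Fin n → ℝ)
    (k : Fin n → ℕ) : E :=
  ((2 * Real.pi * Complex.I : ℂ) ^ n)⁻¹ •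
    ∯ ζ in T(c, R), (∏ i, (ζ i - c i)⁻¹ ^ (k i + 1)) • f ζ

lemma torusIntegrable_prod_sub_inv_pow_smul {f : (Fin n → ℂ) → E} {c : Fin n → ℂ} {R : Fin n → ℝ}
    (hR : ∀ i, 0 < R i) (hf : ContinuousOn f (closedPolydisc c R)) (k : Fin n → ℕ) :
    TorusIntegrable (fun ζ => (∏ i, (ζ i - c i)⁻¹ ^ k i) • f ζ) c R :=
  torusIntegrable_of_continuous_comp <|
    (continuous_finsetProd _ fun i _ =>
      (continuous_torusMap_sub_inv (mem_ball_self (hR i))).pow (k i)).smul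
      (continuous_comp_torusMap (fun i => (hR i).le) hf)

lemma norm_torusMap_sub_center {c : Fin n → ℂ} {R : Fin n → ℝ} (hR : ∀ i, 0 < R i)
    (θ : Fin n → ℝ) (i : Fin n) : ‖torusMap c R θ i - c i‖ = R i := by
  simp [torusMap, abs_of_pos (hR i)]

lemma prod_pow_mul_norm_torusTaylorCoeff_le {f : (Fin n → ℂ) → E} {c : Fin n → ℂ}
    {R : Fin n → ℝ} {M : ℝ} (hR : ∀ i, 0 < R i) (hM : ∀ z ∈ closedPolydisc c R, ‖f z‖ ≤ M)
    (k : Fin n → ℕ) : (∏ i, R i ^ k i) * ‖torusTaylorCoeff f c R k‖ ≤ M := by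
  have hintegral : ‖∯ ζ in T(c, R), (∏ i, (ζ i - c i)⁻¹ ^ (k i + 1)) • f ζ‖ ≤
      ((2 * Real.pi) ^ n * ∏ i, |R i|) * ((∏ i, (R i)⁻¹ ^ (k i + 1)) * M) :=
    norm_torusIntegral_le_of_norm_le_const fun θ => by
      rw [norm_smul, norm_prod]
      simp only [norm_pow, norm_inv, norm_torusMap_sub_center hR]
      gcongr
      · exact Finset.prod_nonneg fun i _ => pow_nonneg (inv_nonneg.2 (hR i).le) _
      · exact hM _ (torusMap_mem_closedPolydisc (fun i => (hR i).le) θ)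
  have hcancel : (∏ i, R i ^ k i) * ((∏ i, |R i|) * ∏ i, (R i)⁻¹ ^ (k i + 1)) = 1 := by
    simp only [← Finset.prod_mul_distrib]
    refine Finset.prod_eq_one fun i _ => ?_
    rw [abs_of_pos (hR i), inv_pow, ← mul_assoc, ← pow_succ]
    exact mul_inv_cancel₀ (pow_ne_zero _ (hR i).ne')
  have hpi : ‖((2 * Real.pi * Complex.I : ℂ) ^ n)⁻¹‖ = ((2 * Real.pi) ^ n)⁻¹ := by
    simp [abs_of_pos Real.pi_pos]
  have hprod : 0 ≤ ∏ i, R i ^ k i := Finset.prod_nonneg fun i _ => pow_nonneg (hR i).le _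
  calc (∏ i, R i ^ k i) * ‖torusTaylorCoeff f c R k‖
      ≤ (∏ i, R i ^ k i) * (((2 * Real.pi) ^ n)⁻¹ *
          (((2 * Real.pi) ^ n * ∏ i, |R i|) * ((∏ i, (R i)⁻¹ ^ (k i + 1)) * M))) := by
        rw [torusTaylorCoeff, norm_smul, hpi]
        gcongr
    _ = ((∏ i, R i ^ k i) * ((∏ i, |R i|) * ∏ i, (R i)⁻¹ ^ (k i + 1))) * M := by
        field_simp
    _ = M := by rw [hcancel, one_mul]

lemma hasSum_sub_inv {w z c : ℂ} (h : ‖z - c‖ < ‖w - c‖) :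
    HasSum (fun j : ℕ => (z - c) ^ j * (w - c)⁻¹ ^ (j + 1)) (w - z)⁻¹ := by
  have hwc : w - c ≠ 0 := norm_pos_iff.1 ((norm_nonneg _).trans_lt h)
  have hgeom := (hasSum_geometric_of_norm_lt_one (ξ := (z - c) / (w - c))
    (by rwa [norm_div, div_lt_one (norm_pos_iff.2 hwc)])).mul_right (w - c)⁻¹
  rw [← mul_inv, sub_mul, one_mul, div_mul_cancel₀ _ hwc, sub_sub_sub_cancel_right] at hgeom
  simpa only [div_eq_mul_inv, mul_pow, mul_assoc, ← pow_succ] using hgeom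

lemma hasSum_prod_sub_inv {w z c : Fin n → ℂ} (h : ∀ i, ‖z i - c i‖ < ‖w i - c i‖) :
    HasSum (fun k : Fin n → ℕ => (∏ i, (z i - c i) ^ k i) * ∏ i, (w i - c i)⁻¹ ^ (k i + 1))
      (∏ i, (w i - z i)⁻¹) := by
  have hfactor : ∀ i, HasSum (fun j : ℕ => (z i - c i) ^ j * (w i - c i)⁻¹ ^ (j + 1))
      (w i - z i)⁻¹ := fun i => hasSum_sub_inv (h i)
  simpa only [Finset.prod_mul_distrib] using hasSum_prod_apply hfactor

lemma hasSum_torusIntegral_sub_inv_pow {f : (Fin n → ℂ) → E} {c z : Fin n → ℂ}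
    {R : Fin n → ℝ} (hf : ContinuousOn f (closedPolydisc c R))
    (hz : ∀ i, z i ∈ ball (c i) (R i)) :
    HasSum (fun k : Fin n → ℕ => (∏ i, (z i - c i) ^ k i) •
        ∯ ζ in T(c, R), (∏ i, (ζ i - c i)⁻¹ ^ (k i + 1)) • f ζ)
      (∯ ζ in T(c, R), (∏ i, (ζ i - z i)⁻¹) • f ζ) := by
  have hR : ∀ i, 0 < R i := fun i => pos_of_mem_ball (hz i)
  obtain ⟨M, hM⟩ : ∃ M, ∀ ζ ∈ closedPolydisc c R, ‖f ζ‖ ≤ M :=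
    (isCompact_univ_pi fun i => isCompact_closedBall (c i) (R i)).exists_bound_of_continuousOn hf
  have hkernel : ∀ θ, HasSum (fun k : Fin n → ℕ =>
      (∏ i, (z i - c i) ^ k i) * ∏ i, (torusMap c R θ i - c i)⁻¹ ^ (k i + 1))
      (∏ i, (torusMap c R θ i - z i)⁻¹) := fun θ => hasSum_prod_sub_inv fun i => by
    rw [norm_torusMap_sub_center hR]
    exact mem_ball_iff_norm.1 (hz i)
  have hsummable := (hkernel 0).summable.norm.mul_right M
  simp only [norm_mul, norm_prod, norm_pow, norm_inv, norm_torusMap_sub_center hR] at hsummable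
  simp only [← torusIntegral_smul]
  refine hasSum_torusIntegral_of_summable_bound (fun k => ?_) (fun k θ => ?_) hsummable fun θ => ?_
  · exact (torusIntegrable_prod_sub_inv_pow_smul hR hf _).smul _
  · simp only [norm_smul, norm_prod, norm_pow, norm_inv, norm_torusMap_sub_center hR, ← mul_assoc]
    gcongr
    · exact mul_nonneg (by positivity) <|
        Finset.prod_nonneg fun i _ => pow_nonneg (inv_nonneg.2 (hR i).le) _
    · exact hM _ (torusMap_mem_closedPolydisc (fun i => (hR i).le) θ)
  · simpa only [mul_smul] using (hkernel θ).smul_const (f (torusMap c R θ))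

lemma hasSum_torusTaylorCoeff [CompleteSpace E] {f : (Fin n → ℂ) → E} {c z : Fin n → ℂ}
    {R : Fin n → ℝ} (hf : DifferentiableOn ℂ f (closedPolydisc c R))
    (hz : ∀ i, z i ∈ ball (c i) (R i)) :
    HasSum (fun k => (∏ i, (z i - c i) ^ k i) • torusTaylorCoeff f c R k) (f z) := by
  have hscaled := (hasSum_torusIntegral_sub_inv_pow hf.continuousOn hz).const_smul
    ((2 * Real.pi * Complex.I : ℂ) ^ n)⁻¹
  rw [torusIntegral_prod_sub_inv_smul hf hz,
    inv_smul_smul₀ (pow_ne_zero _ Complex.two_pi_I_ne_zero)] at hscaled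
  simpa only [torusTaylorCoeff, smul_comm ((2 * Real.pi * Complex.I : ℂ) ^ n)⁻¹] using hscaled

lemma torusIntegral_sum {ι : Type*} (s : Finset ι) {φ : ι → (Fin n → ℂ) → E} {c : Fin n → ℂ}
    {R : Fin n → ℝ} (hφ : ∀ j ∈ s, TorusIntegrable (φ j) c R) :
    (∯ ζ in T(c, R), ∑ j ∈ s, φ j ζ) = ∑ j ∈ s, ∯ ζ in T(c, R), φ j ζ := by
  simp only [torusIntegral, Finset.smul_sum]
  exact MeasureTheory.integral_finsetSum s fun j hj => (hφ j hj).function_integrable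

lemma torusTaylorCoeff_sum_smul {ι : Type*} [Fintype ι] {φ : ι → (Fin n → ℂ) → E} {c : Fin n → ℂ}
    {R : Fin n → ℝ} (hR : ∀ i, 0 < R i) (hφ : ∀ j, ContinuousOn (φ j) (closedPolydisc c R))
    (a : ι → ℂ) (k : Fin n → ℕ) :
    torusTaylorCoeff (fun z => ∑ j, a j • φ j z) c R k =
      ∑ j, a j • torusTaylorCoeff (φ j) c R k := by
  simp only [torusTaylorCoeff, Finset.smul_sum, smul_comm (a _), ← torusIntegral_smul]
  exact torusIntegral_sum _ fun j _ =>
    (torusIntegrable_prod_sub_inv_pow_smul hR ((hφ j).const_smul (a j)) _).smul _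

lemma norm_le_of_torusTaylorCoeff_le [CompleteSpace E] {f : (Fin n → ℂ) → E} {T : ℕ}
    {R r δ X : ℝ} (hr : 0 ≤ r) (hrR : r < R) (hδ : 0 ≤ δ)
    (hf : DifferentiableOn ℂ f (closedPolydisc 0 fun _ => R))
    (hX : ∀ z ∈ closedPolydisc 0 fun _ => R, ‖f z‖ ≤ X)
    (hcube : ∀ k : Fin n → ℕ, (∀ i, k i < T) →
      (∏ i, R ^ k i) * ‖torusTaylorCoeff f 0 (fun _ => R) k‖ ≤ δ)
    {z : Fin n → ℂ} (hz : ∀ i, ‖z i‖ ≤ r) :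
    ‖f z‖ ≤ (δ + n * (r / R) ^ T * X) * (1 - r / R)⁻¹ ^ n := by
  have hR : 0 < R := hr.trans_lt hrR
  have hscale : ∀ {B : ℝ} (k : Fin n → ℕ),
      (∏ i, R ^ k i) * ‖torusTaylorCoeff f 0 (fun _ => R) k‖ ≤ B →
      ‖(∏ i, (z i - 0) ^ k i) • torusTaylorCoeff f 0 (fun _ => R) k‖ ≤
        B * ∏ i, (r / R) ^ k i := fun {B} k hB => by
    have hprod : ∏ i, (r / R) ^ k i * R ^ k i = ∏ i, r ^ k i := by
      simp only [← mul_pow, div_mul_cancel₀ r hR.ne']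
    calc ‖(∏ i, (z i - 0) ^ k i) • torusTaylorCoeff f 0 (fun _ => R) k‖
        ≤ (∏ i, r ^ k i) * ‖torusTaylorCoeff f 0 (fun _ => R) k‖ := by
          simp only [sub_zero, norm_smul, norm_prod, norm_pow]
          gcongr with i
          exact hz i
      _ = (∏ i, (r / R) ^ k i) * ((∏ i, R ^ k i) * ‖torusTaylorCoeff f 0 (fun _ => R) k‖) := by
          rw [← hprod, Finset.prod_mul_distrib, mul_assoc]
      _ ≤ (∏ i, (r / R) ^ k i) * B := by gcongr
      _ = B * ∏ i, (r / R) ^ k i := mul_comm _ _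
  exact norm_le_of_hasSum_of_cube_bound (div_nonneg hr hR.le) ((div_lt_one hR).2 hrR) hδ
    (fun k hk => hscale k (hcube k hk))
    (fun k => hscale k (prod_pow_mul_norm_torusTaylorCoeff_le (fun _ => hR) hX k))
    (hasSum_torusTaylorCoeff hf fun i => by simpa using (hz i).trans_lt hrR)

end CauchyIntegral

section PolydiscSup

variable {n : ℕ}

lemma mem_closedPolydisc_zero {R : ℝ} {z : Fin n → ℂ} :
    z ∈ closedPolydisc 0 (fun _ => R) ↔ ∀ i, ‖z i‖ ≤ R := by
  simp [closedPolydisc]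

lemma norm_le_polydiscSup {f : (Fin n → ℂ) → ℂ} {R : ℝ}
    (hf : ContinuousOn f (closedPolydisc 0 fun _ => R)) {z : Fin n → ℂ}
    (hz : z ∈ closedPolydisc 0 fun _ => R) : ‖f z‖ ≤ PolydiscSup n f R := by
  have hset : {z : Fin n → ℂ | ∀ i, ‖z i‖ ≤ R} = closedPolydisc 0 fun _ => R :=
    Set.ext fun _ => mem_closedPolydisc_zero.symm
  rw [PolydiscSup, hset]
  exact le_csSup ((isCompact_univ_pi fun _ => isCompact_closedBall _ _).bddAbove_image hf.norm)
    (mem_image_of_mem _ hz)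

lemma polydiscSup_le {f : (Fin n → ℂ) → ℂ} {r C : ℝ} (hC : 0 ≤ C)
    (hf : ∀ z, (∀ i, ‖z i‖ ≤ r) → ‖f z‖ ≤ C) : PolydiscSup n f r ≤ C :=
  Real.sSup_le (forall_mem_image.2 hf) hC

lemma exists_int_torusTaylorCoeff_sum_le {ι : Type*} [Fintype ι] {φ : ι → (Fin n → ℂ) → ℂ}
    {P T : ℕ} {R M η : ℝ} (hR : 0 < R) (hη : 0 < η)
    (hφ : ∀ j, ContinuousOn (φ j) (closedPolydisc 0 fun _ => R))
    (hM : ∑ j, PolydiscSup n (φ j) R ≤ M)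
    (hcard : (⌊4 * (P * M) / η⌋₊ + 1) ^ (2 * T ^ n) < (P + 1) ^ Fintype.card ι) :
    ∃ p : ι → ℤ, p ≠ 0 ∧ (∀ j, (p j).natAbs ≤ P) ∧ ∀ k : Fin n → ℕ, (∀ i, k i < T) →
      (∏ i, R ^ k i) *
        ‖torusTaylorCoeff (fun z => ∑ j, (p j : ℂ) * φ j z) 0 (fun _ => R) k‖ ≤ η := by
  let coeff (k : Fin n → ℕ) (j : ι) : ℂ :=
    ((∏ i, R ^ k i : ℝ) : ℂ) * torusTaylorCoeff (φ j) 0 (fun _ => R) k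
  have hprod : ∀ k : Fin n → ℕ, 0 ≤ ∏ i, R ^ k i := fun k => by positivity
  have hcoeff : ∀ k, ∑ j, ‖coeff k j‖ ≤ M := fun k =>
    (Finset.sum_le_sum fun j _ => by
      rw [norm_mul, Complex.norm_of_nonneg (hprod k)]
      exact prod_pow_mul_norm_torusTaylorCoeff_le (fun _ => hR)
        (fun z hz => norm_le_polydiscSup (hφ j) hz) k).trans hM
  obtain ⟨p, hp0, hpP, hp⟩ := exists_int_norm_sum_mul_le
    (fun (k : Fin n → Fin T) j => coeff (fun i => k i) j) P hη (fun k => hcoeff _)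
    (by simpa using hcard)
  refine ⟨p, hp0, hpP, fun k hk => ?_⟩
  have hlinear : torusTaylorCoeff (fun z => ∑ j, (p j : ℂ) * φ j z) 0 (fun _ => R) k =
      ∑ j, (p j : ℂ) * torusTaylorCoeff (φ j) 0 (fun _ => R) k :=
    torusTaylorCoeff_sum_smul (fun _ => hR) hφ (fun j => p j) k
  calc (∏ i, R ^ k i) * ‖torusTaylorCoeff (fun z => ∑ j, (p j : ℂ) * φ j z) 0 (fun _ => R) k‖
      = ‖∑ j, (p j : ℂ) * coeff k j‖ := by
        rw [hlinear, ← Complex.norm_of_nonneg (hprod k), ← norm_mul, Finset.mul_sum]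
        simp only [coeff, mul_left_comm]
    _ ≤ η := hp fun i => ⟨k i, hk i⟩

lemma exists_int_polydiscSup_sum_le {ι : Type*} [Fintype ι] {φ : ι → (Fin n → ℂ) → ℂ}
    {P T : ℕ} {R r M η : ℝ} (hr : 0 ≤ r) (hrR : r < R) (hη : 0 < η)
    (hφ : ∀ j, DifferentiableOn ℂ (φ j) (closedPolydisc 0 fun _ => R))
    (hM : ∑ j, PolydiscSup n (φ j) R ≤ M)
    (hcard : (⌊4 * (P * M) / η⌋₊ + 1) ^ (2 * T ^ n) < (P + 1) ^ Fintype.card ι) :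
    ∃ p : ι → ℤ, p ≠ 0 ∧ (∀ j, (p j).natAbs ≤ P) ∧
      PolydiscSup n (fun z => ∑ j, (p j : ℂ) * φ j z) r ≤
        (η + n * (r / R) ^ T * (P * M)) * (1 - r / R)⁻¹ ^ n := by
  obtain ⟨p, hp0, hpP, hp⟩ := exists_int_torusTaylorCoeff_sum_le (hr.trans_lt hrR) hη
    (fun j => (hφ j).continuousOn) hM hcard
  have hsup : ∀ z ∈ closedPolydisc 0 fun _ => R, ‖∑ j, (p j : ℂ) * φ j z‖ ≤ P * M :=
    fun z hz => calc
      ‖∑ j, (p j : ℂ) * φ j z‖ ≤ ∑ j, P * PolydiscSup n (φ j) R :=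
        norm_sum_le_of_le _ fun j _ => by
          rw [norm_mul, Complex.norm_intCast, ← Int.cast_abs, Int.abs_eq_natAbs]
          gcongr
          · exact_mod_cast hpP j
          · exact norm_le_polydiscSup (hφ j).continuousOn hz
      _ ≤ P * M := by
        rw [← Finset.mul_sum]
        gcongr
  have hbound := fun (z : Fin n → ℂ) (hz : ∀ i, ‖z i‖ ≤ r) =>
    norm_le_of_torusTaylorCoeff_le hr hrR hη.le
      (DifferentiableOn.fun_sum fun j _ => (hφ j).const_mul (p j : ℂ)) hsup hp hz
  exact ⟨p, hp0, hpP,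
    polydiscSup_le ((norm_nonneg _).trans (hbound 0 fun i => by simpa using hr)) hbound⟩

end PolydiscSup

section Parameters

open Real

lemma exists_truncation_order {n : ℕ} {W l : ℝ} (hW : 12 * (n : ℝ) ^ 2 ≤ W) (hl0 : 0 < l)
    (hlW : l ≤ W / 6) : ∃ T : ℕ, W + 2 * n ≤ T * l ∧ T * l ≤ 4 / 3 * W := by
  have hnW : 12 * (n : ℝ) ≤ W := by
    have : (n : ℝ) ≤ (n : ℝ) ^ 2 := by exact_mod_cast Nat.le_self_pow two_ne_zero n
    linarith
  refine ⟨⌈(W + 2 * n) / l⌉₊, (div_le_iff₀ hl0).1 (Nat.le_ceil _), ?_⟩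
  calc ⌈(W + 2 * n) / l⌉₊ * l ≤ ((W + 2 * n) / l + 1) * l := by
        gcongr
        exact (Nat.ceil_lt_add_one (div_nonneg (by linarith) hl0.le)).le
    _ = W + 2 * n + l := by field_simp
    _ ≤ 4 / 3 * W := by linarith

lemma two_le_exp_one : 2 ≤ exp 1 := by linarith [add_one_le_exp 1]

lemma two_pow_mul_exp_neg_pow_le {n T : ℕ} {W l : ℝ} (hT : W + 2 * n ≤ T * l) :
    2 ^ n * (n * exp (-l) ^ T) ≤ exp (-W) / 2 := by
  have hpow : (2 : ℝ) ^ n ≤ exp n := by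
    rw [← exp_one_pow]
    exact pow_le_pow_left₀ two_pos.le two_le_exp_one n
  have hlin : (n : ℝ) ≤ exp n / 2 := by linarith [two_mul_le_exp (x := n)]
  have hdecay : exp (-l) ^ T ≤ exp (-W - 2 * n) := by
    rw [← exp_nat_mul, exp_le_exp]
    linarith
  calc 2 ^ n * (n * exp (-l) ^ T) ≤ exp n * (exp n / 2 * exp (-W - 2 * n)) := by gcongr
    _ = exp (n + n + (-W - 2 * n)) / 2 := by rw [exp_add, exp_add]; ring
    _ = exp (-W) / 2 := by ring_nf

lemma two_pow_mul_exp_le {n : ℕ} (hn : 0 < n) {W : ℝ} (hW : 12 * (n : ℝ) ^ 2 ≤ W) :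
    2 ^ (n + 4) * exp W ≤ exp (4 / 3 * W) := by
  have hn1 : (1 : ℝ) ≤ n := by exact_mod_cast hn
  have hlog : (n + 4) * log 2 ≤ W / 3 := by
    calc (n + 4) * log 2 ≤ (5 * n) * (4 / 5) := by
          gcongr
          · linarith
          · linarith [log_two_lt_d9]
      _ ≤ 4 * (n : ℝ) ^ 2 := by nlinarith
      _ ≤ W / 3 := by linarith
  calc 2 ^ (n + 4) * exp W = exp ((n + 4) * log 2 + W) := by
        rw [exp_add, mul_comm _ (log 2), exp_mul, exp_log two_pos]
        norm_cast
    _ ≤ exp (4 / 3 * W) := exp_le_exp.2 (by linarith)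

lemma two_mul_pow_mul_le {n T : ℕ} (hn : 0 < n) {K W l : ℝ} (hl0 : 0 < l) (hW0 : 0 ≤ W)
    (hT : T * l ≤ 4 / 3 * W) (hK : (2 * W) ^ (n + 1) ≤ K * l ^ n) :
    2 * T ^ n * (4 / 3 * W) ≤ K := by
  refine le_of_mul_le_mul_right (le_trans ?_ hK) (pow_pos hl0 n)
  calc 2 * T ^ n * (4 / 3 * W) * l ^ n = 2 * W * (4 / 3 * (T * l) ^ n) := by ring
    _ ≤ 2 * W * ((4 / 3) ^ n * (4 / 3 * W) ^ n) := by
        gcongr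
        exact le_self_pow₀ (by norm_num) hn.ne'
    _ = 2 * W * (16 / 9 * W) ^ n := by rw [← mul_pow]; ring
    _ ≤ 2 * W * (2 * W) ^ n := by gcongr; norm_num
    _ = (2 * W) ^ (n + 1) := by ring

lemma two_pow_mul_exp_pow_lt {n T L : ℕ} (hn : 0 < n) (hL : L ≠ 0) {N W l : ℝ}
    (hW : 12 * (n : ℝ) ^ 2 ≤ W) (hl0 : 0 < l) (hT : T * l ≤ 4 / 3 * W)
    (hLN : (2 * W) ^ (n + 1) ≤ L * N * l ^ n) :
    (2 ^ (n + 4) * exp W) ^ (2 * T ^ n) < ((⌊exp N⌋₊ : ℝ) + 1) ^ L :=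
  have hW0 : 0 ≤ W := le_trans (by positivity) hW
  calc (2 ^ (n + 4) * exp W) ^ (2 * T ^ n) ≤ exp (4 / 3 * W) ^ (2 * T ^ n) := by
        gcongr
        exact two_pow_mul_exp_le hn hW
    _ = exp (2 * T ^ n * (4 / 3 * W)) := by rw [← exp_nat_mul]; push_cast; rfl
    _ ≤ exp (L * N) := exp_le_exp.2 (two_mul_pow_mul_le hn hl0 hW0 hT hLN)
    _ = exp N ^ L := exp_nat_mul _ _
    _ < ((⌊exp N⌋₊ : ℝ) + 1) ^ L :=
        pow_lt_pow_left₀ (Nat.lt_floor_add_one _) (exp_pos _).le hL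

lemma box_count_lt {n T L : ℕ} (hn : 0 < n) (hL : L ≠ 0) {N U V l : ℝ}
    (hW : 12 * (n : ℝ) ^ 2 ≤ N + U + V) (hl0 : 0 < l) (hT : T * l ≤ 4 / 3 * (N + U + V))
    (hLN : (2 * (N + U + V)) ^ (n + 1) ≤ L * N * l ^ n) :
    (⌊4 * (⌊exp N⌋₊ * exp U) / (exp (-V) / 2 ^ (n + 1))⌋₊ + 1) ^ (2 * T ^ n) <
      (⌊exp N⌋₊ + 1) ^ L := by
  have hW0 : 0 ≤ N + U + V := le_trans (by positivity) hW
  have hratio : 4 * (⌊exp N⌋₊ * exp U) / (exp (-V) / 2 ^ (n + 1)) ≤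
      2 ^ (n + 3) * exp (N + U + V) := calc
    _ ≤ 4 * (exp N * exp U) / (exp (-V) / 2 ^ (n + 1)) := by
      gcongr
      exact Nat.floor_le (exp_pos N).le
    _ = 2 ^ (n + 3) * exp (N + U + V) := by
      rw [exp_neg, exp_add, exp_add]
      field_simp
      ring
  have hboxes : (⌊4 * (⌊exp N⌋₊ * exp U) / (exp (-V) / 2 ^ (n + 1))⌋₊ + 1 : ℝ) ≤
      2 ^ (n + 4) * exp (N + U + V) := calc
    _ ≤ 2 ^ (n + 3) * exp (N + U + V) + 2 ^ (n + 3) * exp (N + U + V) := by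
      gcongr
      · exact (Nat.floor_le (by positivity)).trans hratio
      · exact one_le_mul_of_one_le_of_one_le (one_le_pow₀ one_le_two) (one_le_exp hW0)
    _ = 2 ^ (n + 4) * exp (N + U + V) := by ring
  exact_mod_cast (pow_le_pow_left₀ (by positivity) hboxes _).trans_lt
    (two_pow_mul_exp_pow_lt hn hL hW hl0 hT hLN)

lemma inv_one_sub_exp_neg_le_two {l : ℝ} (hl : 1 ≤ l) : (1 - exp (-l))⁻¹ ≤ 2 := by
  have hexp : exp (-l) ≤ 2⁻¹ := by
    rw [exp_neg]
    exact inv_anti₀ two_pos (two_le_exp_one.trans (exp_le_exp.2 hl))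
  exact inv_le_of_inv_le₀ two_pos (by linarith)

lemma truncation_error_le {n T : ℕ} {N U V l P : ℝ} (hl : 1 ≤ l) (hP : P ≤ exp N)
    (hT : N + U + V + 2 * n ≤ T * l) :
    (exp (-V) / 2 ^ (n + 1) + n * exp (-l) ^ T * (P * exp U)) * (1 - exp (-l))⁻¹ ^ n ≤
      exp (-V) := by
  have hinv : 0 ≤ (1 - exp (-l))⁻¹ := inv_nonneg.2 (sub_nonneg.2 (exp_le_one_iff.2 (by linarith)))
  calc _ ≤ (exp (-V) / 2 ^ (n + 1) + n * exp (-l) ^ T * (exp N * exp U)) * 2 ^ n := by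
        gcongr
        exact inv_one_sub_exp_neg_le_two hl
    _ = exp (-V) / 2 + 2 ^ n * (n * exp (-l) ^ T) * (exp N * exp U) := by
        field_simp
        ring
    _ ≤ exp (-V) / 2 + exp (-(N + U + V)) / 2 * (exp N * exp U) := by
        gcongr
        exact two_pow_mul_exp_neg_pow_le hT
    _ = exp (-V) / 2 + exp (-(N + U + V) + (N + U)) / 2 := by
        rw [exp_add _ (N + U), exp_add N U]
        ring
    _ = exp (-V) := by ring_nf

end Parameters

theorem universal_auxiliary_function_general {ι : Type*} [Fintype ι] {n : ℕ} (hn : 0 < n)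
    {N U V R r : ℝ} (hr : 0 < r) {φ : ι → (Fin n → ℂ) → ℂ}
    (hφ : ∀ j, DifferentiableOn ℂ (φ j) (closedPolydisc 0 fun _ => R))
    (hW : 12 * (n : ℝ) ^ 2 ≤ N + U + V) (hRr1 : Real.exp 1 ≤ R / r)
    (hRr2 : R / r ≤ Real.exp ((N + U + V) / 6)) (hsum : ∑ j, PolydiscSup n (φ j) R ≤ Real.exp U)
    (hLN : (2 * (N + U + V)) ^ (n + 1) ≤ Fintype.card ι * N * Real.log (R / r) ^ n) :
    ∃ p : ι → ℤ, 0 < ((Finset.univ.sup fun j => (p j).natAbs : ℕ) : ℝ) ∧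
      ((Finset.univ.sup fun j => (p j).natAbs : ℕ) : ℝ) ≤ Real.exp N ∧
      PolydiscSup n (fun z => ∑ j, (p j : ℂ) * φ j z) r ≤ Real.exp (-V) := by
  have hW0 : 0 < N + U + V := lt_of_lt_of_le (by positivity) hW
  have hRr0 : 0 < R / r := (Real.exp_pos 1).trans_le hRr1
  have hl1 : 1 ≤ Real.log (R / r) := (Real.le_log_iff_exp_le hRr0).2 hRr1
  have hrR : r < R := (one_lt_div hr).1 (by linarith [two_le_exp_one])
  have hrRexp : r / R = Real.exp (-Real.log (R / r)) := by
    rw [Real.exp_neg, Real.exp_log hRr0, inv_div]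
  have hcard : Fintype.card ι ≠ 0 := fun h => by
    rw [h, Nat.cast_zero, zero_mul, zero_mul] at hLN
    exact hLN.not_gt (by positivity)
  obtain ⟨T, hTlow, hThigh⟩ := exists_truncation_order hW (by linarith)
    ((Real.log_le_iff_le_exp hRr0).2 hRr2)
  obtain ⟨p, hp0, hpN, hp⟩ := exists_int_polydiscSup_sum_le hr.le hrR (by positivity) hφ hsum
    (box_count_lt hn hcard hW (by linarith) hThigh hLN)
  have hfloor : (⌊Real.exp N⌋₊ : ℝ) ≤ Real.exp N := Nat.floor_le (Real.exp_pos N).le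
  refine ⟨p, ?_, (Nat.cast_le.2 (Finset.sup_le fun j _ => hpN j)).trans hfloor, hp.trans ?_⟩
  · obtain ⟨j, hj⟩ := Function.ne_iff.1 hp0
    exact_mod_cast (Int.natAbs_pos.2 hj).trans_le
      (Finset.le_sup (f := fun j => (p j).natAbs) (Finset.mem_univ j))
  · rw [hrRexp]
    exact truncation_error_le hl1 hfloor hTlow

/-- **Existence of universal auxiliary functions.** With `W = N + U + V`, assuming
`W ≥ 12n²`, `e ≤ R/r ≤ e^{W/6}`, `∑ |φ_λ|_R ≤ e^U` and
`(2W)^{n+1} ≤ L N (log(R/r))^n`, there exist rational integers `p₁, …, p_L` with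
`0 < max |p_λ| ≤ e^N` such that `F = p₁φ₁ + ⋯ + p_Lφ_L` satisfies `|F|_r ≤ e^{-V}`. -/
theorem universal_auxiliary_function
    (L n : ℕ) (hL : 0 < L) (hn : 0 < n)
    (N U V R r : ℝ) (hN : 0 < N) (hU : 0 < U) (hV : 0 < V) (hR : 0 < R) (hr : 0 < r)
    (φ : Fin L → (Fin n → ℂ) → ℂ) (hφ : ∀ lam, Differentiable ℂ (φ lam))
    (hW : 12 * (n : ℝ) ^ 2 ≤ N + U + V)
    (hRr1 : Real.exp 1 ≤ R / r)
    (hRr2 : R / r ≤ Real.exp ((N + U + V) / 6))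
    (hsum : ∑ lam, PolydiscSup n (φ lam) R ≤ Real.exp U)
    (hLN : (2 * (N + U + V)) ^ (n + 1) ≤ (L : ℝ) * N * (Real.log (R / r)) ^ n) :
    ∃ p : Fin L → ℤ,
      0 < (((Finset.univ.sup fun lam => (p lam).natAbs) : ℕ) : ℝ) ∧
      (((Finset.univ.sup fun lam => (p lam).natAbs) : ℕ) : ℝ) ≤ Real.exp N ∧
      PolydiscSup n (fun z => ∑ lam, (p lam : ℂ) * φ lam z) r ≤ Real.exp (-V) :=
  universal_auxiliary_function_general hn hr (fun lam => (hφ lam).differentiableOn) hW hRr1 hRr2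
    hsum (by simpa only [Fintype.card_fin] using hLN)
end

section
/- Let d ≥ 2 be a rational integer and let α be an algebraic complex number with 0 < |α| < 1. Then the number Σ_{k=0}^{∞} α^{d^k} is transcendental. -/
/-!
Mahler's method. The series `f(z) = ∑ z ^ d ^ k` satisfies `f(z ^ d) = f(z) - z`, so a polynomial
relation `P(z, f(z)) = 0` near `0` can be transformed into `P(z ^ d, f(z) - z) = 0`; eliminating the
top power of `f` between the two gives a relation of smaller degree, and by descent there is none.

Given `N`, linear algebra produces `P ≠ 0` of bidegree at most `(N, N)` such that `P(z, f(z))` is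
`O(z ^ N ^ 2)` at `0`. If `f(a) = b` with `a`, `b` in a number field, iterating the functional
equation puts `P(a ^ d ^ k, f(a ^ d ^ k))` in that field too. It is nonzero for large `k`, and its
logarithm is at most `-N ^ 2 d ^ k |log |a||` up to a constant, while its height is only
`O(N d ^ k)`. This contradicts Liouville's inequality once `N` is large.
-/

namespace Mahler

open Asymptotics Filter Height Polynomial Topology
open scoped Polynomial.Bivariate

section Elimination

variable {R : Type*} [CommRing R]

theorem mul_expand_sub_mul_expand_ne [IsDomain R] {d : ℕ} (hd : 2 ≤ d) {c : R} (hc : c ≠ 0)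
    (p : R[X]) {q : R[X]} (hq : q ≠ 0) :
    q * expand R d p - p * expand R d q ≠ C c * X * (q * expand R d q) := by
  -- `g = p / q` cannot satisfy `g(X ^ d) - g(X) = c X`: the degree of `g(X ^ d)` is `d` times that
  -- of `g`.
  intro h
  have hqd : expand R d q ≠ 0 := (expand_ne_zero (by omega)).2 hq
  have hcX : C c * X ≠ (0 : R[X]) := mul_ne_zero (C_ne_zero.2 hc) X_ne_zero
  have hdeg_rhs : (C c * X * (q * expand R d q)).natDegree =
      1 + (q.natDegree + q.natDegree * d) := by
    rw [natDegree_mul hcX (mul_ne_zero hq hqd), natDegree_C_mul_X c hc, natDegree_mul hq hqd,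
      natDegree_expand]
  have hdeg_right : (p * expand R d q).natDegree ≤ p.natDegree + q.natDegree * d :=
    natDegree_mul_le.trans_eq (by rw [natDegree_expand])
  obtain hle | hlt := le_or_gt p.natDegree q.natDegree
  · have hdeg_left : (q * expand R d p).natDegree ≤ q.natDegree + p.natDegree * d :=
      natDegree_mul_le.trans_eq (by rw [natDegree_expand])
    have hdeg := hdeg_rhs ▸ h ▸ natDegree_sub_le (q * expand R d p) (p * expand R d q)
    have hmul := Nat.mul_le_mul_right d hle
    omega
  · have hp : p ≠ 0 := ne_zero_of_natDegree_gt hlt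
    have hdeg_left : (q * expand R d p).natDegree = q.natDegree + p.natDegree * d := by
      rw [natDegree_mul hq ((expand_ne_zero (by omega)).2 hp), natDegree_expand]
    have hdeg := natDegree_add_le (C c * X * (q * expand R d q)) (p * expand R d q)
    rw [← sub_eq_iff_eq_add.1 h, hdeg_left, hdeg_rhs] at hdeg
    obtain ⟨t, ht⟩ := Nat.exists_eq_add_of_lt hlt
    rw [ht] at hdeg hdeg_right
    have : 2 * t ≤ t * d := by nlinarith
    have : (q.natDegree + t + 1) * d = q.natDegree * d + t * d + d := by ring
    omega

theorem coeff_taylor_of_natDegree_eq_succ (r : R) {f : R[X]} {n : ℕ}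
    (hf : f.natDegree = n + 1) :
    (taylor r f).coeff n = f.coeff n + (n + 1) * f.coeff (n + 1) * r := by
  have hlt : (hasseDeriv n f).natDegree < 2 := by
    have := natDegree_hasseDeriv_le f n
    omega
  rw [taylor_coeff, eval_eq_sum_range' hlt]
  simp [Finset.sum_range_succ, hasseDeriv_coeff, add_comm 1 n]

/-- The polynomial `P(X ^ d, Y - X)`: the functional equation `f(z ^ d) = f(z) - z` turns a relation
`P(z, f(z)) = 0` into one for this polynomial. -/
noncomputable def mahlerTransform (d : ℕ) (P : R[X][Y]) : R[X][Y] :=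
  taylor (-X) (P.map (expand R d).toRingHom)

theorem natDegree_mahlerTransform {d : ℕ} (hd : d ≠ 0) (P : R[X][Y]) :
    (mahlerTransform d P).natDegree = P.natDegree := by
  rw [mahlerTransform, natDegree_taylor,
    natDegree_map_eq_of_injective (expand_injective (Nat.pos_of_ne_zero hd))]

theorem leadingCoeff_mahlerTransform {d : ℕ} (hd : d ≠ 0) (P : R[X][Y]) :
    (mahlerTransform d P).leadingCoeff = expand R d P.leadingCoeff := by
  rw [mahlerTransform, leadingCoeff_taylor,
    leadingCoeff_map_of_injective (expand_injective (Nat.pos_of_ne_zero hd))]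
  rfl

theorem coeff_mahlerTransform_of_natDegree_eq_succ {d : ℕ} (hd : d ≠ 0) {P : R[X][Y]} {n : ℕ}
    (hP : P.natDegree = n + 1) :
    (mahlerTransform d P).coeff n =
      expand R d (P.coeff n) - C (n + 1 : R) * X * expand R d P.leadingCoeff := by
  have hmap : (P.map (expand R d).toRingHom).natDegree = n + 1 := by
    rw [natDegree_map_eq_of_injective (expand_injective (Nat.pos_of_ne_zero hd)), hP]
  rw [mahlerTransform, coeff_taylor_of_natDegree_eq_succ _ hmap, coeff_map, coeff_map,
    leadingCoeff, hP]
  simp only [AlgHom.toRingHom_eq_coe, RingHom.coe_coe, map_add, map_natCast, map_one]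
  ring

theorem aevalAeval_mahlerTransform {A : Type*} [CommRing A] [Algebra R A] (d : ℕ) (x y : A)
    (P : R[X][Y]) :
    aevalAeval x y (mahlerTransform d P) = aevalAeval (x ^ d) (y - x) P := by
  induction P using Polynomial.induction_on' with
  | add P Q hP hQ =>
    simp only [mahlerTransform, Polynomial.map_add, map_add] at hP hQ ⊢
    rw [hP, hQ]
  | monomial n p =>
    simp [mahlerTransform, ← C_mul_X_pow_eq_monomial, sub_eq_add_neg]

/-- The combination of `P` and `mahlerTransform d P` in which the leading terms in `Y` cancel. -/
noncomputable def eliminant (d : ℕ) (P : R[X][Y]) : R[X][Y] :=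
  C (expand R d P.leadingCoeff) * P - C P.leadingCoeff * mahlerTransform d P

theorem natDegree_eliminant_lt {d : ℕ} (hd : d ≠ 0) {P : R[X][Y]} (hP : P.natDegree ≠ 0) :
    (eliminant d P).natDegree < P.natDegree := by
  have hle : (eliminant d P).natDegree ≤ P.natDegree :=
    (natDegree_sub_le _ _).trans (max_le (natDegree_C_mul_le _ _)
      ((natDegree_C_mul_le _ _).trans_eq (natDegree_mahlerTransform hd P)))
  have htop : (mahlerTransform d P).coeff P.natDegree = expand R d P.leadingCoeff := by
    rw [← leadingCoeff_mahlerTransform hd, leadingCoeff, natDegree_mahlerTransform hd]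
  refine hle.lt_of_ne fun heq => hP ?_
  have hcoeff : (eliminant d P).leadingCoeff = 0 := by
    rw [leadingCoeff, heq, eliminant, coeff_sub, coeff_C_mul, coeff_C_mul, htop, coeff_natDegree,
      mul_comm, sub_self]
  rw [← heq, leadingCoeff_eq_zero.1 hcoeff, natDegree_zero]

theorem eliminant_ne_zero [IsDomain R] [CharZero R] {d : ℕ} (hd : 2 ≤ d) {P : R[X][Y]}
    (hP : P.natDegree ≠ 0) : eliminant d P ≠ 0 := by
  intro h
  obtain ⟨n, hn⟩ := Nat.exists_eq_succ_of_ne_zero hP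
  have hlead : P.leadingCoeff ≠ 0 := leadingCoeff_ne_zero.2 (by rintro rfl; simp at hP)
  have hcoeff : (eliminant d P).coeff n = 0 := by rw [h, coeff_zero]
  rw [eliminant, coeff_sub, coeff_C_mul, coeff_C_mul,
    coeff_mahlerTransform_of_natDegree_eq_succ (by omega) hn] at hcoeff
  have hn0 : (n + 1 : R) ≠ 0 := n.cast_add_one_ne_zero
  refine mul_expand_sub_mul_expand_ne hd hn0 (P.coeff n) hlead ?_
  linear_combination -hcoeff

end Elimination

theorem eq_zero_of_eventually_aeval_eq_zero {F 𝕜 : Type*} [Field F] [NontriviallyNormedField 𝕜]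
    [Algebra F 𝕜] {p : F[X]} {x : 𝕜} (hp : ∀ᶠ z in 𝓝 x, aeval z p = 0) : p = 0 := by
  have hroots : {z : 𝕜 | (p.map (algebraMap F 𝕜)).IsRoot z} ∈ 𝓝 x := by
    filter_upwards [hp] with z hz
    exact (eval_map_algebraMap p z).trans hz
  exact (Polynomial.map_eq_zero _).1
    (eq_zero_of_infinite_isRoot _ (infinite_of_mem_nhds x hroots))

theorem not_eventually_aevalAeval_eq_zero {F 𝕜 : Type*} [Field F] [CharZero F]
    [NontriviallyNormedField 𝕜] [Algebra F 𝕜] {d : ℕ} (hd : 2 ≤ d) {f : 𝕜 → 𝕜}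
    (hf : ∀ᶠ z in 𝓝 0, f (z ^ d) = f z - z) {P : F[X][Y]} (hP : P ≠ 0) :
    ¬ ∀ᶠ z in 𝓝 0, aevalAeval z (f z) P = 0 := by
  have hd0 : d ≠ 0 := by omega
  induction hn : P.natDegree using Nat.strong_induction_on generalizing P with
  | _ n ih =>
    intro hzero
    obtain rfl | hpos := eq_or_ne n 0
    · obtain ⟨p, rfl⟩ := natDegree_eq_zero.1 hn
      simp only [aevalAeval_C] at hzero
      exact hP (by rw [eq_zero_of_eventually_aeval_eq_zero hzero, C_0])
    · subst hn
      refine ih _ (natDegree_eliminant_lt hd0 hpos) (eliminant_ne_zero hd hpos) rfl ?_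
      have hpow : Tendsto (fun z : 𝕜 => z ^ d) (𝓝 0) (𝓝 0) := by
        simpa [hd0] using (continuous_pow d).tendsto (0 : 𝕜)
      filter_upwards [hzero, hpow.eventually hzero, hf] with z hz hzd hfz
      rw [eliminant, map_sub, map_mul, map_mul, aevalAeval_mahlerTransform, ← hfz, hz, hzd]
      simp only [mul_zero, sub_zero]

section BivariateEvaluation

theorem map_aevalAeval {R A B : Type*} [CommRing R] [CommRing A] [CommRing B] [Algebra R A]
    [Algebra R B] (φ : A →ₐ[R] B) (x y : A) (P : R[X][Y]) :
    φ (aevalAeval x y P) = aevalAeval (φ x) (φ y) P := by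
  have h : φ.comp (aevalAeval x y) = aevalAeval (φ x) (φ y) :=
    (aevalAevalEquiv R B).symm.injective (by simp [aevalAevalEquiv])
  exact DFunLike.congr_fun h P

theorem aeval_equivMvPolynomial {R A : Type*} [CommRing R] [CommRing A] [Algebra R A] (x y : A)
    (P : R[X][Y]) :
    MvPolynomial.aeval ![x, y] (Bivariate.equivMvPolynomial R P) = aevalAeval x y P := by
  rw [Bivariate.equivMvPolynomial, AlgEquiv.ofAlgHom_apply, map_aevalAeval]
  simp

theorem analyticAt_aevalAeval {𝕜 R : Type*} [NontriviallyNormedField 𝕜] [CommRing R]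
    [Algebra R 𝕜] {f : 𝕜 → 𝕜} {x : 𝕜} (hf : AnalyticAt 𝕜 f x) (P : R[X][Y]) :
    AnalyticAt 𝕜 (fun z => aevalAeval z (f z) P) x := by
  simp only [← aeval_equivMvPolynomial]
  refine AnalyticAt.aeval_mvPolynomial (Fin.forall_fin_two.2 ⟨?_, ?_⟩) _
  · exact analyticAt_id
  · exact hf

theorem isBigO_aevalAeval {R 𝕜 : Type*} [CommRing R] [NontriviallyNormedField 𝕜]
    [Algebra R 𝕜] {f : 𝕜 → 𝕜} (hf : AnalyticAt 𝕜 f 0) {T : R[X]} {M : ℕ}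
    (hT : (fun z => f z - aeval z T) =O[𝓝 0] (· ^ M)) {P : R[X][Y]} (hP : X ^ M ∣ P.eval T) :
    (fun z => aevalAeval z (f z) P) =O[𝓝 0] (· ^ M) := by
  obtain ⟨S, hS⟩ := hP
  obtain ⟨Q, hQ⟩ : X - C T ∣ P - C (P.eval T) := X_sub_C_dvd_sub_C_eval
  have hdecomp (z : 𝕜) : aevalAeval z (f z) P =
      z ^ M * aeval z S + (f z - aeval z T) * aevalAeval z (f z) Q := by
    have := congrArg (aevalAeval z (f z)) hQ
    simp only [hS, map_sub, map_mul, map_pow, aevalAeval_C, aevalAeval_Y, aeval_X] at this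
    linear_combination this
  have hSone : (fun z : 𝕜 => aeval z S) =O[𝓝 0] (1 : 𝕜 → 𝕜) :=
    (Polynomial.continuous_aeval S).continuousAt.isBigO_one _
  have hQone : (fun z => aevalAeval z (f z) Q) =O[𝓝 0] (1 : 𝕜 → 𝕜) :=
    (analyticAt_aevalAeval hf Q).continuousAt.isBigO_one _
  simp_rw [hdecomp]
  refine .add ?_ ?_
  · simpa using (isBigO_refl (fun z : 𝕜 => z ^ M) (𝓝 0)).mul hSone
  · simpa using hT.mul hQone

theorem aevalAeval_eq_sum_of_natDegree_le {R : Type*} [CommRing R] {m n : ℕ} {P : R[X][Y]}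
    (hm : ∀ j, (P.coeff j).natDegree ≤ m) (hn : P.natDegree ≤ n) (x y : R) :
    aevalAeval x y P = ∑ a : Fin (m + 1) × Fin (n + 1),
      (P.coeff a.2).coeff a.1 * (x ^ (a.1 : ℕ) * y ^ (a.2 : ℕ)) := by
  rw [coe_aevalAeval_eq_evalEval, evalEval, eval_eq_sum_range' (Nat.lt_succ_of_le hn),
    eval_finsetSum, Fintype.sum_prod_type_right, Finset.sum_range]
  refine Finset.sum_congr rfl fun j _ => ?_
  rw [eval_mul, eval_pow, eval_C, eval_eq_sum_range' (Nat.lt_succ_of_le (hm j)), Finset.sum_mul,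
    Finset.sum_range]
  simp only [mul_assoc]

end BivariateEvaluation

section AuxiliaryPolynomial

theorem natDegree_le_of_mem_degreeLT_succ {R : Type*} [Semiring R] {n : ℕ} {p : R[X]}
    (hp : p ∈ degreeLT R (n + 1)) : p.natDegree ≤ n := by
  rw [degreeLT_succ_eq_degreeLE, mem_degreeLE] at hp
  exact natDegree_le_iff_degree_le.2 hp

theorem exists_X_pow_dvd_eval {F : Type*} [Field F] {m n M : ℕ} (hM : M < (m + 1) * (n + 1))
    (T : F[X]) :
    ∃ P : F[X][Y], P ≠ 0 ∧ (∀ j, (P.coeff j).natDegree ≤ m) ∧ P.natDegree ≤ n ∧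
      X ^ M ∣ P.eval T := by
  let ofCoeffs : (Fin (n + 1) → degreeLT F (m + 1)) →ₗ[F] degreeLT F[X] (n + 1) :=
    (degreeLTEquiv F[X] (n + 1)).symm.toLinearMap.restrictScalars F ∘ₗ
      (degreeLT F (m + 1)).subtype.compLeft (Fin (n + 1))
  let lowCoeffs : degreeLT F[X] (n + 1) →ₗ[F] (Fin M → F) :=
    LinearMap.pi fun i => lcoeff F i ∘ₗ
      ((leval T).comp (degreeLT F[X] (n + 1)).subtype).restrictScalars F
  have hrank : Module.finrank F (Fin M → F) <
      Module.finrank F (Fin (n + 1) → degreeLT F (m + 1)) := by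
    rwa [Module.finrank_fin_fun, Module.finrank_pi_fintype, Fin.sum_const, smul_eq_mul,
      (degreeLTEquiv F (m + 1)).finrank_eq, Module.finrank_fin_fun, mul_comm]
  obtain ⟨c, hc, hc0⟩ := (Submodule.ne_bot_iff _).1
    (LinearMap.ker_ne_bot_of_finrank_lt (f := lowCoeffs ∘ₗ ofCoeffs) hrank)
  have hcoeff (j : Fin (n + 1)) : (ofCoeffs c : F[X][Y]).coeff j = c j :=
    congrFun ((degreeLTEquiv F[X] (n + 1)).apply_symm_apply fun j => (c j : F[X])) j
  have hdeg := natDegree_le_of_mem_degreeLT_succ (ofCoeffs c).2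
  refine ⟨ofCoeffs c, fun h => hc0 ?_, fun j => ?_, hdeg, ?_⟩
  · ext1 j
    exact Subtype.ext ((hcoeff j).symm.trans (by rw [h, coeff_zero]; rfl))
  · obtain hj | hj := lt_or_ge n j
    · rw [coeff_eq_zero_of_natDegree_lt (hdeg.trans_lt hj), natDegree_zero]
      exact m.zero_le
    · exact (hcoeff ⟨j, Nat.lt_succ_of_le hj⟩).symm ▸ natDegree_le_of_mem_degreeLT_succ (c _).2
  · exact X_pow_dvd_iff.2 fun i hi => congrFun (LinearMap.mem_ker.1 hc) ⟨i, hi⟩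

end AuxiliaryPolynomial

section MahlerSeries

/-- The function `f(z) = ∑ z ^ d ^ k`. The sum converges for `‖z‖ < 1` when `2 ≤ d`; where it
diverges, `mahlerSeries d z` is the junk value `0`. -/
noncomputable def mahlerSeries (d : ℕ) (z : ℂ) : ℂ :=
  ∑' k : ℕ, z ^ d ^ k

theorem eventually_norm_lt_one {E : Type*} [SeminormedAddCommGroup E] :
    ∀ᶠ z : E in 𝓝 0, ‖z‖ < 1 := by
  simpa only [sub_zero] using eventually_norm_sub_lt (0 : E) one_pos

variable {d : ℕ} (hd : 2 ≤ d)
include hd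

theorem summable_pow_pow {z : ℂ} (hz : ‖z‖ < 1) : Summable fun k : ℕ => z ^ d ^ k := by
  refine .of_norm_bounded (summable_geometric_of_lt_one (norm_nonneg z) hz) fun k => ?_
  rw [norm_pow]
  exact pow_le_pow_of_le_one (norm_nonneg _) hz.le (Nat.lt_pow_self hd).le

theorem mahlerSeries_eq_sum_add {z : ℂ} (hz : ‖z‖ < 1) (s : ℕ) :
    mahlerSeries d z = ∑ k ∈ Finset.range s, z ^ d ^ k + mahlerSeries d (z ^ d ^ s) := by
  simp only [mahlerSeries, ← pow_mul, ← pow_add, add_comm s]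
  exact ((summable_pow_pow hd hz).sum_add_tsum_nat_add s).symm

theorem analyticAt_mahlerSeries : AnalyticAt ℂ (mahlerSeries d) 0 := by
  refine DifferentiableOn.analyticAt (s := Metric.ball 0 2⁻¹) ?_
    (Metric.ball_mem_nhds 0 (by norm_num))
  refine Complex.differentiableOn_tsum_of_summable_norm (u := fun k : ℕ => (2⁻¹ : ℝ) ^ k)
    (summable_geometric_of_lt_one (by norm_num) (by norm_num))
    (fun k => (differentiable_fun_id.pow (d ^ k)).differentiableOn) Metric.isOpen_ball
    fun k z hz => ?_
  have hz : ‖z‖ ≤ 2⁻¹ := (mem_ball_zero_iff.1 hz).le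
  calc ‖z ^ d ^ k‖ = ‖z‖ ^ d ^ k := norm_pow _ _
    _ ≤ 2⁻¹ ^ d ^ k := by gcongr
    _ ≤ 2⁻¹ ^ k := pow_le_pow_of_le_one (by norm_num) (by norm_num) (Nat.lt_pow_self hd).le

theorem isBigO_mahlerSeries : mahlerSeries d =O[𝓝 0] fun z => z := by
  have hzero : mahlerSeries d 0 = 0 := by
    simp [mahlerSeries, show d ≠ 0 by omega]
  simpa only [hzero, sub_zero] using (analyticAt_mahlerSeries hd).differentiableAt.isBigO_sub

theorem isBigO_mahlerSeries_sub_sum (s : ℕ) :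
    (fun z => mahlerSeries d z - ∑ k ∈ Finset.range s, z ^ d ^ k) =O[𝓝 0] (· ^ d ^ s) := by
  have hpow : Tendsto (fun z : ℂ => z ^ d ^ s) (𝓝 0) (𝓝 0) := by
    have hd0 : d ≠ 0 := by omega
    simpa [hd0] using (continuous_pow (d ^ s)).tendsto (0 : ℂ)
  refine ((isBigO_mahlerSeries hd).comp_tendsto hpow).congr' ?_ .rfl
  filter_upwards [eventually_norm_lt_one] with z hz
  rw [mahlerSeries_eq_sum_add hd hz s, Function.comp_apply, add_sub_cancel_left]

theorem mahlerSeries_pow {z : ℂ} (hz : ‖z‖ < 1) :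
    mahlerSeries d (z ^ d) = mahlerSeries d z - z := by
  simpa using (sub_eq_of_eq_add' (mahlerSeries_eq_sum_add hd hz 1)).symm

theorem exists_aevalAeval_isBigO_pow {F : Type*} [Field F] [Algebra F ℂ] {m n M : ℕ}
    (hM : M < (m + 1) * (n + 1)) :
    ∃ P : F[X][Y], (∀ j, (P.coeff j).natDegree ≤ m) ∧ P.natDegree ≤ n ∧
      (∀ᶠ z in 𝓝[≠] 0, aevalAeval z (mahlerSeries d z) P ≠ 0) ∧
      (fun z => aevalAeval z (mahlerSeries d z) P) =O[𝓝 0] (· ^ M) := by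
  have : CharZero F := (algebraMap F ℂ).charZero
  have hf := analyticAt_mahlerSeries hd
  let T : F[X] := ∑ k ∈ Finset.range M, X ^ d ^ k
  obtain ⟨P, hP, hm, hn, hdvd⟩ := exists_X_pow_dvd_eval hM T
  have hT : (fun z => mahlerSeries d z - aeval z T) =O[𝓝 0] (· ^ M) := by
    simp only [T, map_sum, map_pow, aeval_X]
    exact (isBigO_mahlerSeries_sub_sum hd M).trans
      (isLittleO_pow_pow (Nat.lt_pow_self hd)).isBigO
  have hnonzero : ¬ ∀ᶠ z in 𝓝 0, aevalAeval z (mahlerSeries d z) P = 0 :=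
    not_eventually_aevalAeval_eq_zero hd
      (eventually_norm_lt_one.mono fun _ => mahlerSeries_pow hd) hP
  exact ⟨P, hm, hn,
    (analyticAt_aevalAeval hf P).eventually_eq_zero_or_eventually_ne_zero.resolve_left hnonzero,
    isBigO_aevalAeval hf hT hdvd⟩

end MahlerSeries

section Heights

theorem logHeight_pow_le {K : Type*} [Field K] [AdmissibleAbsValues K] (m : ℕ) (x : K) :
    logHeight (fun i : Fin (m + 1) => x ^ (i : ℕ)) ≤ m * logHeight₁ x := by
  -- The powers of `x` are among the coordinates of the `m`-fold tensor power of `(x, 1)`.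
  let selector (i : Fin (m + 1)) (k : Fin m) : Fin 2 := if (k : ℕ) < i then 0 else 1
  have hselector (i : Fin (m + 1)) : ∏ k, ![x, 1] (selector i k) = x ^ (i : ℕ) := by
    simp only [selector, apply_ite ![x, 1], Matrix.cons_val_zero, Matrix.cons_val_one,
      Finset.prod_ite, Finset.prod_const, one_pow, mul_one, Fin.card_filter_val_lt,
      min_eq_right (Nat.le_of_lt_succ i.2)]
  calc logHeight (fun i : Fin (m + 1) => x ^ (i : ℕ))
      = logHeight fun i : Fin (m + 1) => ∏ k, ![x, 1] (selector i k) := by simp only [hselector]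
    _ ≤ logHeight fun I : Fin m → Fin 2 => ∏ k, ![x, 1] (I k) :=
        logHeight_comp_le selector fun I : Fin m → Fin 2 => ∏ k, ![x, 1] (I k)
    _ = m * logHeight₁ x := by
        rw [logHeight_fun_prod_eq (x := fun _ => ![x, 1]) fun _ => by simp,
          logHeight₁_eq_logHeight, Fin.sum_const, nsmul_eq_mul]

theorem exists_logHeight₁_aevalAeval_le {K : Type*} [Field K] [AdmissibleAbsValues K]
    {m n : ℕ} {P : K[X][Y]} (hm : ∀ j, (P.coeff j).natDegree ≤ m) (hn : P.natDegree ≤ n) :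
    ∃ B : ℝ, ∀ x y : K,
      logHeight₁ (aevalAeval x y P) ≤ B + m * logHeight₁ x + n * logHeight₁ y := by
  let A : Fin 2 × (Fin (m + 1) × Fin (n + 1)) → K := fun a =>
    ![(P.coeff a.2.2).coeff a.2.1, if a.2 = 0 then 1 else 0] a.1
  refine ⟨totalWeight K * Real.log (Nat.card (Fin (m + 1) × Fin (n + 1))) + logHeight A,
    fun x y => ?_⟩
  have hpowers (t : K) (k : ℕ) : (fun i : Fin (k + 1) => t ^ (i : ℕ)) ≠ 0 :=
    fun h => by simpa using congrFun h 0
  have hlin : ![aevalAeval x y P, 1] =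
      fun r => ∑ a, A (r, a) * (x ^ (a.1 : ℕ) * y ^ (a.2 : ℕ)) := by
    ext r
    fin_cases r
    · simpa [A] using aevalAeval_eq_sum_of_natDegree_le hm hn x y
    · simp [A]
  rw [logHeight₁_eq_logHeight, hlin, add_assoc]
  refine (logHeight_linearMap_apply_le A _).trans ?_
  gcongr
  rw [logHeight_fun_mul_eq (hpowers x m) (hpowers y n)]
  exact add_le_add (logHeight_pow_le m x) (logHeight_pow_le n y)

theorem log_norm_le_logHeight₁ {K : Type*} [Field K] [NumberField K] (φ : K →+* ℂ) (x : K) :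
    Real.log ‖φ x‖ ≤ logHeight₁ x := by
  let v := NumberField.InfinitePlace.mk φ
  calc Real.log ‖φ x‖ ≤ Real.posLog (v x) := le_max_right 0 _
    _ ≤ v.mult * Real.posLog (v x) :=
        le_mul_of_one_le_left Real.posLog_nonneg
          (mod_cast NumberField.InfinitePlace.one_le_mult)
    _ ≤ ∑ w : NumberField.InfinitePlace K, w.mult * Real.posLog (w x) :=
        Finset.single_le_sum
          (f := fun w : NumberField.InfinitePlace K => w.mult * Real.posLog (w x))
          (fun w _ => mul_nonneg w.mult.cast_nonneg Real.posLog_nonneg) (Finset.mem_univ v)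
    _ ≤ logHeight₁ x := by
        rw [NumberField.logHeight₁_eq]
        exact le_add_of_nonneg_right (finsum_nonneg fun _ => Real.posLog_nonneg)

/-- Liouville's inequality; at `0` both sides vanish because `Real.log 0 = 0`. -/
theorem neg_logHeight₁_le_log_norm {K : Type*} [Field K] [NumberField K] (φ : K →+* ℂ) (x : K) :
    -logHeight₁ x ≤ Real.log ‖φ x‖ := by
  rw [neg_le, ← Real.log_inv, ← norm_inv, ← map_inv₀, ← logHeight₁_inv]
  exact log_norm_le_logHeight₁ φ x⁻¹

theorem logHeight₁_sub_sum_le {K : Type*} [Field K] [AdmissibleAbsValues K] {d : ℕ} (hd : 2 ≤ d)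
    (a b : K) (k : ℕ) :
    logHeight₁ (b - ∑ j ∈ Finset.range k, a ^ d ^ j) ≤
      d ^ k * (logHeight₁ a + logHeight₁ b + totalWeight K * Real.log 2) := by
  have ha := zero_le_logHeight₁ a
  have hw : 0 ≤ totalWeight K * Real.log 2 := by positivity
  have hd2 : (2 : ℝ) ≤ d := mod_cast hd
  set H := logHeight₁ a + logHeight₁ b + totalWeight K * Real.log 2 with hH
  induction k with
  | zero =>
    rw [Finset.sum_range_zero, sub_zero, pow_zero, one_mul]
    linarith
  | succ k ih =>
    have hstep : totalWeight K * Real.log 2 + d ^ k * logHeight₁ a ≤ d ^ k * H := by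
      have := mul_nonneg (sub_nonneg.2 (one_le_pow₀ (one_le_two.trans hd2) : 1 ≤ (d : ℝ) ^ k)) hw
      have : 0 ≤ (d : ℝ) ^ k * logHeight₁ b := by positivity
      rw [hH]
      linarith
    calc logHeight₁ (b - ∑ j ∈ Finset.range (k + 1), a ^ d ^ j)
        = logHeight₁ (b - ∑ j ∈ Finset.range k, a ^ d ^ j - a ^ d ^ k) := by
          rw [Finset.sum_range_succ, sub_sub]
      _ ≤ totalWeight K * Real.log 2 + logHeight₁ (b - ∑ j ∈ Finset.range k, a ^ d ^ j) +
            logHeight₁ (a ^ d ^ k) := logHeight₁_sub_le _ _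
      _ = totalWeight K * Real.log 2 + d ^ k * logHeight₁ a +
            logHeight₁ (b - ∑ j ∈ Finset.range k, a ^ d ^ j) := by
          rw [logHeight₁_pow, Nat.cast_pow]
          ring
      _ ≤ d ^ k * H + d ^ k * H := add_le_add hstep ih
      _ = 2 * (d ^ k * H) := (two_mul _).symm
      _ ≤ d * (d ^ k * H) := by gcongr
      _ = d ^ (k + 1) * H := by ring

end Heights

section MainInequality

theorem nonpos_of_eventually_pow_mul_le {r x C : ℝ} (hr : 1 < r)
    (h : ∀ᶠ k : ℕ in atTop, r ^ k * x ≤ C) : x ≤ 0 := by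
  by_contra! hx
  have hlarge := ((tendsto_pow_atTop_atTop_of_one_lt hr).atTop_mul_const hx).eventually_gt_atTop C
  obtain ⟨k, hle, hgt⟩ := (h.and hlarge).exists
  exact hle.not_gt hgt

theorem exists_eventually_log_norm_le {𝕜 : Type*} [NormedField 𝕜] {g : 𝕜 → 𝕜} {M : ℕ}
    (hg : g =O[𝓝 0] (· ^ M)) (hne : ∀ᶠ z in 𝓝[≠] 0, g z ≠ 0) :
    ∃ C : ℝ, ∀ᶠ z in 𝓝[≠] 0, Real.log ‖g z‖ ≤ C + M * Real.log ‖z‖ := by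
  obtain ⟨B, hB, hbound⟩ := hg.exists_pos
  refine ⟨Real.log B, ?_⟩
  filter_upwards [hne, hbound.bound.filter_mono nhdsWithin_le_nhds, self_mem_nhdsWithin]
    with z hgz hle hz
  calc Real.log ‖g z‖ ≤ Real.log (B * ‖z ^ M‖) := Real.log_le_log (norm_pos_iff.2 hgz) hle
    _ = Real.log B + M * Real.log ‖z‖ := by
        rw [Real.log_mul hB.ne' (norm_ne_zero_iff.2 (pow_ne_zero M hz)), norm_pow, Real.log_pow]

theorem tendsto_pow_pow_nhdsNE {𝕜 : Type*} [NormedField 𝕜] {d : ℕ} (hd : 1 < d) {z : 𝕜}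
    (hz0 : z ≠ 0) (hz1 : ‖z‖ < 1) : Tendsto (fun k : ℕ => z ^ d ^ k) atTop (𝓝[≠] 0) :=
  tendsto_nhdsWithin_iff.2
    ⟨(tendsto_pow_atTop_nhds_zero_of_norm_lt_one hz1).comp (tendsto_pow_atTop_atTop_of_one_lt hd),
      .of_forall fun _ => pow_ne_zero _ hz0⟩

variable {K : Type*} [Field K] [NumberField K] [Algebra K ℂ] {d : ℕ}

theorem mul_neg_log_norm_le (hd : 2 ≤ d) {a b : K} (ha0 : a ≠ 0) (ha1 : ‖algebraMap K ℂ a‖ < 1)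
    (hb : mahlerSeries d (algebraMap K ℂ a) = algebraMap K ℂ b) {m n M : ℕ}
    (hM : M < (m + 1) * (n + 1)) :
    M * -Real.log ‖algebraMap K ℂ a‖ ≤
      m * logHeight₁ a + n * (logHeight₁ a + logHeight₁ b + totalWeight K * Real.log 2) := by
  set α := algebraMap K ℂ a
  set H := logHeight₁ a + logHeight₁ b + totalWeight K * Real.log 2
  obtain ⟨P, hm, hn, hne, hbigO⟩ := exists_aevalAeval_isBigO_pow (F := K) hd hM
  obtain ⟨C, hC⟩ := exists_eventually_log_norm_le hbigO hne
  obtain ⟨B, hB⟩ := exists_logHeight₁_aevalAeval_le hm hn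
  let e (k : ℕ) : K := aevalAeval (a ^ d ^ k) (b - ∑ j ∈ Finset.range k, a ^ d ^ j) P
  have he (k : ℕ) :
      algebraMap K ℂ (e k) = aevalAeval (α ^ d ^ k) (mahlerSeries d (α ^ d ^ k)) P := by
    have hiterate : mahlerSeries d (α ^ d ^ k) =
        algebraMap K ℂ (b - ∑ j ∈ Finset.range k, a ^ d ^ j) := by
      rw [map_sub, ← hb, mahlerSeries_eq_sum_add hd ha1 k, map_sum]
      simp only [α, map_pow, add_sub_cancel_left]
    rw [hiterate, ← map_pow]
    exact map_aevalAeval (Algebra.ofId K ℂ) _ _ P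
  have hα : α ≠ 0 := (_root_.map_ne_zero _).2 ha0
  rw [← sub_nonpos]
  refine nonpos_of_eventually_pow_mul_le (r := d) (C := B + C) (mod_cast hd) ?_
  filter_upwards [(tendsto_pow_pow_nhdsNE hd hα ha1).eventually hC] with k hupper
  have hheight : logHeight₁ (e k) ≤ B + m * (d ^ k * logHeight₁ a) + n * (d ^ k * H) := by
    refine (hB _ _).trans ?_
    rw [logHeight₁_pow, Nat.cast_pow]
    gcongr
    exact logHeight₁_sub_sum_le hd a b k
  have hliouville := neg_logHeight₁_le_log_norm (algebraMap K ℂ) (e k)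
  rw [he] at hliouville
  rw [norm_pow, Real.log_pow, Nat.cast_pow] at hupper
  linarith

theorem mahlerSeries_algebraMap_ne (hd : 2 ≤ d) {a : K} (ha0 : a ≠ 0)
    (ha1 : ‖algebraMap K ℂ a‖ < 1) (b : K) :
    mahlerSeries d (algebraMap K ℂ a) ≠ algebraMap K ℂ b := by
  intro hb
  set l := -Real.log ‖algebraMap K ℂ a‖ with hl
  set H := logHeight₁ a + logHeight₁ b + totalWeight K * Real.log 2 with hH
  have hlpos : 0 < l :=
    neg_pos.2 (Real.log_neg (norm_pos_iff.2 ((_root_.map_ne_zero _).2 ha0)) ha1)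
  have hHpos : 0 ≤ logHeight₁ a + H := by positivity
  obtain ⟨N, hN⟩ := exists_nat_gt ((logHeight₁ a + H) / l)
  have hNpos : (0 : ℝ) < N := (div_nonneg hHpos hlpos.le).trans_lt hN
  have hle : N * (N * l) ≤ N * (logHeight₁ a + H) := by
    have := mul_neg_log_norm_le hd ha0 ha1 hb (by nlinarith : N * N < (N + 1) * (N + 1))
    push_cast [← hl, ← hH] at this
    linarith
  exact ((div_lt_iff₀ hlpos).1 hN).not_ge (le_of_mul_le_mul_left hle hNpos)

end MainInequality

end Mahler

/-- **Mahler's theorem.** For a rational integer `d ≥ 2` and an algebraic number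
`α` with `0 < |α| < 1`, the number `∑_{k≥0} α^{d^k}` is transcendental. -/
theorem mahler_transcendence
    (d : ℕ) (hd : 2 ≤ d)
    (α : ℂ) (halg : IsAlgebraic ℚ α)
    (h0 : 0 < ‖α‖) (h1 : ‖α‖ < 1) :
    Transcendental ℚ (∑' k : ℕ, α ^ (d ^ k)) := by
  intro hβ
  set β := ∑' k : ℕ, α ^ (d ^ k)
  let K := IntermediateField.adjoin ℚ {α, β}
  have : FiniteDimensional ℚ K := IntermediateField.finiteDimensional_adjoin <| by
    rintro x (rfl | rfl)
    exacts [halg.isIntegral, hβ.isIntegral]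
  have : NumberField K := ⟨⟩
  let a : K := ⟨α, IntermediateField.subset_adjoin _ _ (.inl rfl)⟩
  let b : K := ⟨β, IntermediateField.subset_adjoin _ _ (.inr rfl)⟩
  have ha : a ≠ 0 := fun h => norm_pos_iff.1 h0 (congrArg Subtype.val h)
  exact Mahler.mahlerSeries_algebraMap_ne hd ha h1 b rfl
end

section
/- There exists a constant c > 0 with the following property: for every nonzero algebraic integer θ of degree d ≥ 3 which is not a root of unity, one has M(θ) ≥ 1 + c (log log d / log d)^3. -/
/-!
The argument is that of Cantor and Straus. Let `α` be a root of `f`, of degree `d`, write `M` for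
its Mahler measure, and `f_p` for the minimal polynomial of `α ^ p`. Take the confluent Vandermonde
determinant of all conjugates of `α`, each repeated `T` times, and of all conjugates of `α ^ p` for
the primes `p` of a finite set `S`.

Twice the logarithm of its absolute value is a sum of logarithms of discriminants and resultants.
These are nonzero integers, and `Res(f_p, f)` is divisible by `p ^ d` since `f(X ^ p) ≡ f ^ p`
modulo `p`; so the logarithm of the determinant is at least `T d ∑ log p`. Bounding the
determinant row by row gives an upper bound, in which the Mahler measure of `f_p` is `M ^ p`.
Comparing the two,
`T ∑ log p ≤ (T ^ 2 + #S) log ((T + #S) d) + (T + #S) (T + ∑ p) log M`.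

This needs `f_p` to have degree `d`, which fails for at most `log d / log 2` primes: each failure
at least halves the degree of the field generated by a further power of `α`. Taking for `S` the
other primes up to `T ^ 2 log T`, with `T` a large multiple of `log d / log log d`, the first term
on the right is at most half of the left-hand side, and the second gives the lower bound for `M`.
-/

namespace Dobrowolski

open Polynomial Finset Real
open scoped IntermediateField

section ConfluentVandermonde

variable {R : Type*} [CommRing R] {n : ℕ}

/-- The confluent Vandermonde matrix of a sequence of points, repetitions allowed. Row `i` is the
Hasse derivative at `z i` of the row `1, X, X², …`, of order the number of earlier occurrences of
the point `z i`. -/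
noncomputable def confluentVandermonde [DecidableEq R] (z : Fin n → R) : Matrix (Fin n) (Fin n) R :=
  Matrix.of fun i k => (taylor (z i) (X ^ (k : ℕ))).coeff #{m ∈ Iio i | z m = z i}

/-- The Newton basis of the polynomials of degree less than `n` attached to a sequence of `n`
points; in this basis the confluent Vandermonde matrix becomes triangular. -/
noncomputable def newtonPolynomial (z : Fin n → R) (m : Fin n) : R[X] :=
  ∏ k ∈ Iio m, (X - C (z k))

lemma monic_newtonPolynomial (z : Fin n → R) (m : Fin n) : (newtonPolynomial z m).Monic :=
  monic_prod_of_monic _ _ fun k _ => monic_X_sub_C (z k)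

lemma natDegree_newtonPolynomial [Nontrivial R] (z : Fin n → R) (m : Fin n) :
    (newtonPolynomial z m).natDegree = m := by
  rw [newtonPolynomial, natDegree_prod_of_monic _ _ fun k _ => monic_X_sub_C (z k)]
  simp

lemma taylor_newtonPolynomial [DecidableEq R] (z : Fin n → R) (m : Fin n) (r : R) :
    taylor r (newtonPolynomial z m) =
      X ^ #{k ∈ Iio m | z k = r} * ∏ k ∈ Iio m with z k ≠ r, (X + C (r - z k)) := by
  have h : taylor r (newtonPolynomial z m) = ∏ k ∈ Iio m, (X + C (r - z k)) := by
    rw [newtonPolynomial, taylor_apply, Polynomial.prod_comp]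
    exact prod_congr rfl fun k _ => by simp [add_sub_assoc]
  rw [h, ← prod_filter_mul_prod_filter_not (Iio m) (fun k => z k = r), ← prod_const]
  congr 1
  exact prod_congr rfl fun k hk => by simp [(mem_filter.1 hk).2]

lemma coeff_taylor_newtonPolynomial_self [DecidableEq R] (z : Fin n → R) (i : Fin n) :
    (taylor (z i) (newtonPolynomial z i)).coeff #{m ∈ Iio i | z m = z i} =
      ∏ m ∈ Iio i with z m ≠ z i, (z i - z m) := by
  rw [taylor_newtonPolynomial, coeff_X_pow_mul', if_pos le_rfl, Nat.sub_self,
    coeff_zero_eq_eval_zero, eval_prod]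
  simp

lemma coeff_taylor_newtonPolynomial_eq_zero_of_lt [DecidableEq R] (z : Fin n → R) {i j : Fin n}
    (hij : i < j) : (taylor (z i) (newtonPolynomial z j)).coeff #{m ∈ Iio i | z m = z i} = 0 := by
  rw [taylor_newtonPolynomial, coeff_X_pow_mul', if_neg]
  refine not_le.2 (card_lt_card (ssubset_iff_of_subset ?_ |>.2 ⟨i, by simpa using hij, by simp⟩))
  exact filter_subset_filter _ (Iio_subset_Iio hij.le)

lemma confluentVandermonde_mul_coeff [DecidableEq R] (z : Fin n → R) {f : Fin n → R[X]}
    (hf : ∀ j, (f j).natDegree < n) :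
    confluentVandermonde z * Matrix.of (fun i j : Fin n => (f j).coeff i) =
      Matrix.of fun i j => (taylor (z i) (f j)).coeff #{m ∈ Iio i | z m = z i} := by
  ext i j
  rw [Matrix.mul_apply, Matrix.of_apply]
  conv_rhs => rw [(f j).as_sum_range' n (hf j), map_sum, finsetSum_coeff,
    ← Fin.sum_univ_eq_sum_range (fun k => (taylor (z i) (monomial k ((f j).coeff k))).coeff _)]
  exact sum_congr rfl fun k _ => by simp [confluentVandermonde, taylor_monomial, mul_comm]

theorem det_confluentVandermonde [Nontrivial R] [DecidableEq R] (z : Fin n → R) :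
    (confluentVandermonde z).det = ∏ i, ∏ m ∈ Iio i with z m ≠ z i, (z i - z m) := by
  have hdet := congrArg Matrix.det (confluentVandermonde_mul_coeff z
    (f := newtonPolynomial z) fun j => by rw [natDegree_newtonPolynomial]; exact j.2)
  rw [Matrix.det_mul, Matrix.det_matrixOfPolynomials _ (natDegree_newtonPolynomial z)
    (monic_newtonPolynomial z), mul_one] at hdet
  rw [hdet, Matrix.det_of_isLowerTriangular]
  · exact prod_congr rfl fun i _ => coeff_taylor_newtonPolynomial_self z i
  · exact fun i j hij => coeff_taylor_newtonPolynomial_eq_zero_of_lt z hij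

end ConfluentVandermonde

section PairwiseDistances

variable {𝕜 : Type*} [NormedField 𝕜]

lemma norm_det_le_of_norm_row_le {n : Type*} [Fintype n] [DecidableEq n]
    (A : Matrix n n 𝕜) (b : n → ℝ) (h : ∀ i k, ‖A i k‖ ≤ b i) :
    ‖A.det‖ ≤ (Fintype.card n).factorial * ∏ i, b i := by
  have hsign (σ : Equiv.Perm n) : ‖((Equiv.Perm.sign σ : ℤ) : 𝕜)‖ = 1 := by
    rcases Int.units_eq_one_or (Equiv.Perm.sign σ) with h | h <;> simp [h]
  rw [← Matrix.det_transpose, Matrix.det_apply', ← Fintype.card_perm, ← nsmul_eq_mul, ← card_univ]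
  refine (norm_sum_le _ _).trans (sum_le_card_nsmul _ _ _ fun σ _ => ?_)
  rw [norm_mul, hsign, one_mul, norm_prod]
  exact prod_le_prod (fun _ _ => norm_nonneg _) fun i _ => h i _

lemma norm_coeff_taylor_X_pow_le (r : 𝕜) {k n : ℕ} (j : ℕ) (hk : k ≤ n) :
    ‖(taylor r (X ^ k)).coeff j‖ ≤ (n : ℝ) ^ j * max 1 ‖r‖ ^ n := by
  rw [taylor_X_pow, coeff_X_add_C_pow, norm_mul, norm_pow, mul_comm]
  have hr : (1 : ℝ) ≤ max 1 ‖r‖ := le_max_left _ _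
  gcongr
  · refine (Nat.norm_cast_le _).trans ?_
    rw [norm_one, mul_one]
    exact_mod_cast (Nat.choose_le_pow k j).trans (Nat.pow_le_pow_left hk j)
  · calc ‖r‖ ^ (k - j) ≤ max 1 ‖r‖ ^ (k - j) := by gcongr; exact le_max_right _ _
      _ ≤ max 1 ‖r‖ ^ n := pow_le_pow_right₀ hr (by lia)

lemma norm_det_confluentVandermonde_le [DecidableEq 𝕜] {n : ℕ} (z : Fin n → 𝕜) :
    ‖(confluentVandermonde z).det‖ ≤
      ∏ i, ((n : ℝ) ^ #{m | z m = z i} * max 1 ‖z i‖ ^ n) := by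
  have hcard (i : Fin n) : #{m ∈ Iio i | z m = z i} + 1 ≤ #{m | z m = z i} :=
    card_lt_card (ssubset_iff_of_subset (filter_subset_filter _ (subset_univ _)) |>.2
      ⟨i, by simp, by simp⟩)
  calc ‖(confluentVandermonde z).det‖
      ≤ n.factorial * ∏ i, ((n : ℝ) ^ #{m ∈ Iio i | z m = z i} * max 1 ‖z i‖ ^ n) := by
        simpa using norm_det_le_of_norm_row_le (confluentVandermonde z) _ fun i k =>
          norm_coeff_taylor_X_pow_le (z i) _ k.2.le
    _ ≤ (n : ℝ) ^ n * ∏ i, ((n : ℝ) ^ #{m ∈ Iio i | z m = z i} * max 1 ‖z i‖ ^ n) := by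
        gcongr
        exact_mod_cast Nat.factorial_le_pow n
    _ = ∏ i, ((n : ℝ) ^ (#{m ∈ Iio i | z m = z i} + 1) * max 1 ‖z i‖ ^ n) := by
        simp only [pow_succ', mul_assoc, prod_mul_distrib (f := fun _ => (n : ℝ)), prod_const,
          card_univ, Fintype.card_fin]
    _ ≤ _ := by
        gcongr with i
        · exact_mod_cast i.pos
        · exact hcard i

lemma log_norm_det_confluentVandermonde [DecidableEq 𝕜] {n : ℕ} (z : Fin n → 𝕜) :
    log ‖(confluentVandermonde z).det‖ = ∑ i, ∑ j ∈ Iio i, log ‖z i - z j‖ := by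
  have hne : ∀ i, ∀ j ∈ {j ∈ Iio i | z j ≠ z i}, ‖z i - z j‖ ≠ 0 := fun i j hj =>
    norm_ne_zero_iff.2 (sub_ne_zero.2 (mem_filter.1 hj).2.symm)
  simp only [det_confluentVandermonde, norm_prod]
  rw [log_prod fun i _ => prod_ne_zero_iff.2 (hne i)]
  refine sum_congr rfl fun i _ => ?_
  rw [log_prod (hne i), sum_filter_of_ne]
  intro j _ hj hij
  simp [hij] at hj

lemma sum_sum_eq_two_mul_sum_sum_Iio {ι R : Type*} [LinearOrder ι] [Fintype ι]
    [LocallyFiniteOrderBot ι] [LocallyFiniteOrderTop ι] [NonAssocSemiring R] {f : ι → ι → R}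
    (hsymm : ∀ i j, f i j = f j i) (hdiag : ∀ i, f i i = 0) :
    ∑ i, ∑ j, f i j = 2 * ∑ i, ∑ j ∈ Iio i, f i j := by
  have hsplit (i : ι) : ∑ j, f i j = ∑ j ∈ Iio i, f i j + ∑ j ∈ Ioi i, f i j := by
    rw [← sum_add_sum_compl {i}, sum_singleton, hdiag, zero_add, ← Ioi_disjUnion_Iio,
      sum_disjUnion, add_comm]
  have hswap : ∑ i, ∑ j ∈ Ioi i, f i j = ∑ i, ∑ j ∈ Iio i, f i j := by
    rw [sum_comm' (t' := univ) (s' := fun j => Iio j) (by simp)]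
    simp only [hsymm]
  rw [sum_congr rfl fun i _ => hsplit i, sum_add_distrib, hswap, two_mul]

-- Pairs of equal points contribute nothing to the left-hand side, because `log 0 = 0`.
lemma sum_log_norm_sub_le_fin [DecidableEq 𝕜] {n : ℕ} (z : Fin n → 𝕜) :
    ∑ i, ∑ j, log ‖z i - z j‖ ≤ 2 * ∑ i, (#{m | z m = z i} * log n + n * log⁺ ‖z i‖) := by
  have hdet : 0 < ‖(confluentVandermonde z).det‖ := by
    rw [norm_pos_iff, det_confluentVandermonde]
    refine prod_ne_zero_iff.2 fun i _ => prod_ne_zero_iff.2 fun j hj => ?_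
    exact sub_ne_zero.2 (mem_filter.1 hj).2.symm
  have hn (i : Fin n) : (n : ℝ) ≠ 0 := by exact_mod_cast i.pos.ne'
  have hmax (i : Fin n) : max 1 ‖z i‖ ≠ 0 := by positivity
  rw [sum_sum_eq_two_mul_sum_sum_Iio (fun i j => by rw [norm_sub_rev]) (by simp),
    ← log_norm_det_confluentVandermonde]
  gcongr
  refine (log_le_log hdet (norm_det_confluentVandermonde_le z)).trans_eq ?_
  rw [log_prod fun i _ => mul_ne_zero (pow_ne_zero _ (hn i)) (pow_ne_zero _ (hmax i))]
  refine sum_congr rfl fun i _ => ?_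
  rw [log_mul (pow_ne_zero _ (hn i)) (pow_ne_zero _ (hmax i)), log_pow, log_pow,
    posLog_eq_log_max_one (norm_nonneg _)]

lemma sum_log_norm_sub_le [DecidableEq 𝕜] {ι : Type*} [Fintype ι] (z : ι → 𝕜) :
    ∑ i, ∑ j, log ‖z i - z j‖ ≤
      2 * ∑ i, (#{m | z m = z i} * log (Fintype.card ι) + Fintype.card ι * log⁺ ‖z i‖) := by
  let σ := (Fintype.equivFin ι).symm
  have hcard (i : ι) : #{m | z (σ m) = z i} = #{m | z m = z i} := card_equiv σ (by simp)
  have hsum (g : ι → ℝ) : ∑ k, g (σ k) = ∑ i, g i := σ.sum_comp g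
  have h := sum_log_norm_sub_le_fin fun k => z (σ k)
  simp only [hcard, fun w : 𝕜 => hsum fun j => log ‖w - z j‖] at h
  rwa [hsum fun i => ∑ j, log ‖z i - z j‖, hsum fun i =>
    (#{m | z m = z i} * log (Fintype.card ι) + Fintype.card ι * log⁺ ‖z i‖)] at h

theorem sum_mul_log_norm_sub_le {ι : Type*} [Fintype ι] {z : ι → 𝕜} (hz : Function.Injective z)
    (e : ι → ℕ) :
    ∑ i, ∑ j, e i * e j * log ‖z i - z j‖ ≤
      2 * ∑ i, ((e i : ℝ) ^ 2 * log (∑ j, e j : ℕ) + (∑ j, e j : ℕ) * (e i * log⁺ ‖z i‖)) := by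
  classical
  have hcard (i : ι) : #{m : Σ i, Fin (e i) | m.1 = i} = e i := by
    rw [card_filter, Fintype.sum_sigma]
    simp [apply_ite card]
  have h := sum_log_norm_sub_le fun k : Σ i, Fin (e i) => z k.1
  simp only [hz.eq_iff, hcard, Fintype.sum_sigma, sum_const, card_univ, Fintype.card_fin,
    Fintype.card_sigma, nsmul_eq_mul] at h
  convert h using 3 with i _ i
  · simp only [mul_sum, mul_assoc]
  · ring

end PairwiseDistances

section ComplexRoots

/-- The complex roots of an integer polynomial, without multiplicities. -/
noncomputable def complexRoots (f : ℤ[X]) : Finset ℂ := (f.aroots ℂ).toFinset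

/-- The logarithmic Mahler measure of an integer polynomial. -/
noncomputable def logMahler (f : ℤ[X]) : ℝ := (f.map (Int.castRingHom ℂ)).logMahlerMeasure

/-- For distinct monic irreducible `f` and `g` this is `log |Res(f, g)|`. Since `log 0 = 0`, the
definition also makes sense when `f = g`, where it is `log |disc f|`. -/
noncomputable def logResultant (f g : ℤ[X]) : ℝ :=
  ∑ x ∈ complexRoots f, ∑ y ∈ complexRoots g, log ‖x - y‖

variable {f g : ℤ[X]}

lemma mem_complexRoots (hf : f.Monic) {x : ℂ} : x ∈ complexRoots f ↔ aeval x f = 0 := by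
  rw [complexRoots, Multiset.mem_toFinset, mem_aroots, and_iff_right hf.ne_zero]

lemma minpoly_eq_of_mem_complexRoots (hf : f.Monic) (hirr : Irreducible f) {x : ℂ}
    (hx : x ∈ complexRoots f) : minpoly ℤ x = f := by
  have hroot := (mem_complexRoots hf).1 hx
  have hint : IsIntegral ℤ x := ⟨f, hf, hroot⟩
  exact eq_of_monic_of_associated (minpoly.monic hint) hf <|
    ((minpoly.irreducible hint).dvd_irreducible_iff_associated hirr).1
      (minpoly.isIntegrallyClosed_dvd hint hroot)

lemma complexRoots_val (hf : f.Monic) (hirr : Irreducible f) :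
    (complexRoots f).val = f.aroots ℂ := by
  have hsep : (f.map (algebraMap ℤ ℚ)).Separable :=
    ((hf.irreducible_iff_irreducible_map_fraction_map (K := ℚ)).1 hirr).separable
  rw [complexRoots, Multiset.toFinset_val, Multiset.dedup_eq_self]
  have := nodup_roots (hsep.map (f := algebraMap ℚ ℂ))
  rwa [Polynomial.map_map, ← IsScalarTower.algebraMap_eq] at this

lemma card_complexRoots (hf : f.Monic) (hirr : Irreducible f) :
    #(complexRoots f) = f.natDegree := by
  rw [Finset.card_def, complexRoots_val hf hirr, aroots_def,
    ← (IsAlgClosed.splits _).natDegree_eq_card_roots, hf.natDegree_map]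

lemma logMahler_eq_sum_complexRoots (hf : f.Monic) (hirr : Irreducible f) :
    logMahler f = ∑ x ∈ complexRoots f, log⁺ ‖x‖ := by
  rw [logMahler, logMahlerMeasure_eq_log_leadingCoeff_add_sum_log_roots, (hf.map _).leadingCoeff,
    norm_one, log_one, zero_add, Finset.sum, complexRoots_val hf hirr]
  rfl

lemma aeval_eq_prod_complexRoots (hf : f.Monic) (hirr : Irreducible f) (y : ℂ) :
    aeval y f = ∏ x ∈ complexRoots f, (y - x) := by
  rw [Finset.prod, complexRoots_val hf hirr, ← eval_map_algebraMap,
    (IsAlgClosed.splits (f.map (algebraMap ℤ ℂ))).eval_eq_prod_roots_of_monic (hf.map _)]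

lemma aeval_derivative_eq_prod_complexRoots (hf : f.Monic) (hirr : Irreducible f) {x : ℂ}
    (hx : x ∈ complexRoots f) :
    aeval x (derivative f) = ∏ y ∈ (complexRoots f).erase x, (x - y) := by
  rw [Finset.prod, erase_val, complexRoots_val hf hirr, ← eval_map_algebraMap, ← derivative_map]
  exact (IsAlgClosed.splits _).eval_root_derivative (hf.map _) (Multiset.mem_toFinset.1 hx)

lemma prod_norm_aeval_eq_abs_resultant (hf : f.Monic) (hirr : Irreducible f) (h : ℤ[X]) :
    ∏ x ∈ complexRoots f, ‖aeval x h‖ = |(f.resultant h : ℝ)| := by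
  have hres := resultant_eq_prod_eval (f.map (algebraMap ℤ ℂ)) (h.map (algebraMap ℤ ℂ))
    h.natDegree natDegree_map_le (IsAlgClosed.splits _)
  rw [hf.natDegree_map, resultant_map_map, (hf.map _).leadingCoeff, one_pow, one_mul] at hres
  simp only [eval_map_algebraMap] at hres
  rw [← norm_prod, Finset.prod, complexRoots_val hf hirr, aroots_def, ← hres]
  simp

theorem sum_log_norm_aeval_nonneg (hf : f.Monic) (hirr : Irreducible f) {h : ℤ[X]} (hh : ¬ f ∣ h) :
    0 ≤ ∑ x ∈ complexRoots f, log ‖aeval x h‖ := by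
  have hne : ∀ x ∈ complexRoots f, ‖aeval x h‖ ≠ 0 := fun x hx h0 => hh <| by
    rw [← minpoly_eq_of_mem_complexRoots hf hirr hx]
    exact minpoly.isIntegrallyClosed_dvd ⟨f, hf, (mem_complexRoots hf).1 hx⟩ (norm_eq_zero.1 h0)
  have hres := prod_ne_zero_iff.2 hne
  rw [prod_norm_aeval_eq_abs_resultant hf hirr] at hres
  rw [← log_prod hne, prod_norm_aeval_eq_abs_resultant hf hirr]
  refine log_nonneg ?_
  exact_mod_cast Int.one_le_abs (by simpa using hres)

lemma sum_log_norm_sub_eq (hf : f.Monic) (hirr : Irreducible f) {y : ℂ}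
    (hy : y ∉ complexRoots f) : ∑ x ∈ complexRoots f, log ‖y - x‖ = log ‖aeval y f‖ := by
  rw [aeval_eq_prod_complexRoots hf hirr, norm_prod, log_prod]
  exact fun x hx => norm_ne_zero_iff.2 (sub_ne_zero.2 (ne_of_mem_of_not_mem hx hy).symm)

lemma sum_log_norm_sub_eq_of_mem (hf : f.Monic) (hirr : Irreducible f) {x : ℂ}
    (hx : x ∈ complexRoots f) :
    ∑ y ∈ complexRoots f, log ‖x - y‖ = log ‖aeval x (derivative f)‖ := by
  rw [aeval_derivative_eq_prod_complexRoots hf hirr hx, norm_prod, log_prod,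
    sum_erase _ (by simp)]
  exact fun y hy => norm_ne_zero_iff.2 (sub_ne_zero.2 (ne_of_mem_erase hy).symm)

lemma disjoint_complexRoots (hf : f.Monic) (hf' : Irreducible f) (hg : g.Monic)
    (hg' : Irreducible g) (hfg : f ≠ g) : Disjoint (complexRoots f) (complexRoots g) :=
  disjoint_left.2 fun _ hxf hxg => hfg <| by
    rw [← minpoly_eq_of_mem_complexRoots hf hf' hxf, minpoly_eq_of_mem_complexRoots hg hg' hxg]

lemma logResultant_comm (f g : ℤ[X]) : logResultant f g = logResultant g f := by
  rw [logResultant, sum_comm]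
  exact sum_congr rfl fun y _ => sum_congr rfl fun x _ => by rw [norm_sub_rev]

lemma logResultant_eq_sum_log_norm_aeval (hf : f.Monic) (hf' : Irreducible f) (hg : g.Monic)
    (hg' : Irreducible g) (hfg : f ≠ g) :
    logResultant f g = ∑ x ∈ complexRoots f, log ‖aeval x g‖ :=
  sum_congr rfl fun _ hx => sum_log_norm_sub_eq hg hg'
    (disjoint_left.1 (disjoint_complexRoots hf hf' hg hg' hfg) hx)

lemma logResultant_self (hf : f.Monic) (hf' : Irreducible f) :
    logResultant f f = ∑ x ∈ complexRoots f, log ‖aeval x (derivative f)‖ :=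
  sum_congr rfl fun _ hx => sum_log_norm_sub_eq_of_mem hf hf' hx

theorem logResultant_nonneg (hf : f.Monic) (hf' : Irreducible f) (hg : g.Monic)
    (hg' : Irreducible g) : 0 ≤ logResultant f g := by
  obtain rfl | hfg := eq_or_ne f g
  · have hdeg : f.natDegree ≠ 0 := fun h0 =>
      hf'.not_isUnit (hf.natDegree_eq_zero.1 h0 ▸ isUnit_one)
    rw [logResultant_self hf hf']
    exact sum_log_norm_aeval_nonneg hf hf' <| hf.not_dvd_of_natDegree_lt
      (mt derivative_eq_zero.1 hdeg) (natDegree_derivative_lt hdeg)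
  · rw [logResultant_eq_sum_log_norm_aeval hf hf' hg hg' hfg]
    exact sum_log_norm_aeval_nonneg hf hf' fun hdvd => hfg <|
      eq_of_monic_of_associated hf hg ((hf'.dvd_irreducible_iff_associated hg').1 hdvd)

end ComplexRoots

section CantorStraus

variable {κ : Type*} [Fintype κ]

theorem sum_mul_mul_logResultant_le {F : κ → ℤ[X]} (hinj : Function.Injective F)
    (hmonic : ∀ a, (F a).Monic) (hirr : ∀ a, Irreducible (F a)) (e : κ → ℕ) :
    ∑ a, ∑ b, e a * e b * logResultant (F a) (F b) ≤
      2 * ∑ a, (e a ^ 2 * (F a).natDegree * log (∑ b, e b * (F b).natDegree : ℕ) +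
        (∑ b, e b * (F b).natDegree : ℕ) * (e a * logMahler (F a))) := by
  have hz : Function.Injective fun k : Σ a, complexRoots (F a) => (k.2 : ℂ) := by
    rintro ⟨a, x, hx⟩ ⟨b, y, hy⟩ (rfl : x = y)
    obtain rfl : a = b := hinj <| by
      rw [← minpoly_eq_of_mem_complexRoots (hmonic a) (hirr a) hx,
        minpoly_eq_of_mem_complexRoots (hmonic b) (hirr b) hy]
    rfl
  have h := sum_mul_log_norm_sub_le hz fun k => e k.1
  simp only [Fintype.sum_sigma, Fintype.card_coe, card_complexRoots (hmonic _) (hirr _),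
    sum_add_distrib, sum_const, card_univ, nsmul_eq_mul, smul_eq_mul,
    mul_comm (F _).natDegree] at h
  simp only [logResultant, logMahler_eq_sum_complexRoots (hmonic _) (hirr _),
    ← sum_coe_sort (complexRoots _), mul_sum, sum_add_distrib]
  convert h using 3 with a _ a
  · rw [sum_comm]
  · exact sum_congr rfl fun a _ => by ring

variable {F : Option κ → ℤ[X]}

lemma two_mul_mul_sum_logResultant_none_le (hmonic : ∀ a, (F a).Monic)
    (hirr : ∀ a, Irreducible (F a)) (T : ℕ) :
    2 * (T * ∑ k, logResultant (F (some k)) (F none)) ≤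
      ∑ a : Option κ, ∑ b : Option κ, ((a.elim T fun _ => 1 : ℕ) : ℝ) *
        (b.elim T fun _ => 1 : ℕ) * logResultant (F a) (F b) := by
  have hnonneg : ∀ a b, 0 ≤ logResultant (F a) (F b) := fun a b =>
    logResultant_nonneg (hmonic a) (hirr a) (hmonic b) (hirr b)
  have hdiag := mul_nonneg (mul_self_nonneg (T : ℝ)) (hnonneg none none)
  have hrest := sum_nonneg fun k (_ : k ∈ univ) => sum_nonneg fun l (_ : l ∈ univ) =>
    hnonneg (some k) (some l)
  simp only [Fintype.sum_option, Option.elim, Nat.cast_one, one_mul, mul_one, sum_add_distrib,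
    ← mul_sum, logResultant_comm (F none) (F (some _))]
  linarith

theorem mul_sum_logResultant_none_le (hinj : Function.Injective F) (hmonic : ∀ a, (F a).Monic)
    (hirr : ∀ a, Irreducible (F a)) {d : ℕ} (hdeg : ∀ a, (F a).natDegree = d) (T : ℕ) :
    T * ∑ k, logResultant (F (some k)) (F none) ≤
      d * ((T ^ 2 + Fintype.card κ) * log ((T + Fintype.card κ) * d : ℕ) +
        (T + Fintype.card κ) * (T * logMahler (F none) + ∑ k, logMahler (F (some k)))) := by
  have h := (two_mul_mul_sum_logResultant_none_le hmonic hirr T).trans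
    (sum_mul_mul_logResultant_le hinj hmonic hirr fun a => a.elim T fun _ => 1)
  refine (le_of_mul_le_mul_left h two_pos).trans_eq ?_
  simp only [hdeg, sum_add_distrib, ← mul_sum, ← sum_mul, Fintype.sum_option, Option.elim,
    sum_const, card_univ, nsmul_eq_mul]
  push_cast
  ring_nf

end CantorStraus

section FrobeniusCongruence

lemma exists_expand_eq_pow_add (f : ℤ[X]) {p : ℕ} (hp : p.Prime) :
    ∃ h : ℤ[X], expand ℤ p f = f ^ p + C (p : ℤ) * h := by
  have := Fact.mk hp
  have hmod : (expand ℤ p f - f ^ p).map (Int.castRingHom (ZMod p)) = 0 := by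
    rw [Polynomial.map_sub, Polynomial.map_pow, map_expand, ZMod.expand_card, sub_self]
  have hdvd : C (p : ℤ) ∣ expand ℤ p f - f ^ p := by
    rw [C_dvd_iff_dvd_coeff]
    intro i
    rw [← ZMod.intCast_zmod_eq_zero_iff_dvd, ← eq_intCast (Int.castRingHom (ZMod p)), ← coeff_map,
      hmod, coeff_zero]
  obtain ⟨h, hh⟩ := hdvd
  exact ⟨h, by rw [← hh]; ring⟩

lemma exists_aeval_pow_eq_mul (R : Type*) [CommRing R] (f : ℤ[X]) {p : ℕ} (hp : p.Prime) :
    ∃ h : ℤ[X], ∀ x : R, aeval x f = 0 → aeval (x ^ p) f = p * aeval x h := by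
  obtain ⟨h, hh⟩ := exists_expand_eq_pow_add f hp
  refine ⟨h, fun x hx => ?_⟩
  simpa [expand_aeval, hx, hp.ne_zero] using congrArg (aeval x) hh

theorem natDegree_mul_log_le_sum_log_norm_aeval_pow {f : ℤ[X]} (hf : f.Monic)
    (hirr : Irreducible f) {p : ℕ} (hp : p.Prime)
    (hroot : ∀ x ∈ complexRoots f, aeval (x ^ p) f ≠ 0) :
    f.natDegree * log p ≤ ∑ x ∈ complexRoots f, log ‖aeval (x ^ p) f‖ := by
  obtain ⟨h, hh⟩ := exists_aeval_pow_eq_mul ℂ f hp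
  have heval : ∀ x ∈ complexRoots f, aeval (x ^ p) f = p * aeval x h := fun x hx =>
    hh x ((mem_complexRoots hf).1 hx)
  have hne : ∀ x ∈ complexRoots f, aeval x h ≠ 0 := fun x hx h0 =>
    hroot x hx (by rw [heval x hx, h0, mul_zero])
  obtain ⟨x, hx⟩ : (complexRoots f).Nonempty := card_pos.1 <| by
    rw [card_complexRoots hf hirr]
    exact hf.natDegree_pos.2 fun h1 => hirr.not_isUnit (h1 ▸ isUnit_one)
  have hdvd : ¬ f ∣ h := fun hfh =>
    hne x hx (aeval_eq_zero_of_dvd_aeval_eq_zero hfh ((mem_complexRoots hf).1 hx))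
  calc f.natDegree * log p
      ≤ f.natDegree * log p + ∑ x ∈ complexRoots f, log ‖aeval x h‖ :=
        le_add_of_nonneg_right (sum_log_norm_aeval_nonneg hf hirr hdvd)
    _ = ∑ x ∈ complexRoots f, log ‖aeval (x ^ p) f‖ := by
        rw [← card_complexRoots hf hirr, ← nsmul_eq_mul, ← sum_const, ← sum_add_distrib]
        refine sum_congr rfl fun x hx => ?_
        rw [heval x hx, norm_mul, Complex.norm_natCast,
          log_mul (mod_cast hp.ne_zero) (norm_ne_zero_iff.2 (hne x hx))]

end FrobeniusCongruence

section Powers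

variable {α : ℂ} {n : ℕ}

lemma natDegree_minpoly_eq_finrank (hα : IsIntegral ℤ α) :
    (minpoly ℤ α).natDegree = Module.finrank ℚ ℚ⟮α⟯ := by
  rw [IntermediateField.adjoin.finrank (hα.tower_top (A := ℚ)),
    minpoly.isIntegrallyClosed_eq_field_fractions' ℚ hα, (minpoly.monic hα).natDegree_map]

lemma pow_mem_complexRoots_minpoly_pow (hα : IsIntegral ℤ α) (n : ℕ) {x : ℂ}
    (hx : x ∈ complexRoots (minpoly ℤ α)) : x ^ n ∈ complexRoots (minpoly ℤ (α ^ n)) := by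
  have hdvd : minpoly ℤ α ∣ (minpoly ℤ (α ^ n)).comp (X ^ n) :=
    minpoly.isIntegrallyClosed_dvd hα (by simp [aeval_comp])
  rw [mem_complexRoots (minpoly.monic hα)] at hx
  rw [mem_complexRoots (minpoly.monic (hα.pow n))]
  simpa [aeval_comp] using aeval_eq_zero_of_dvd_aeval_eq_zero hdvd hx

lemma natDegree_minpoly_pow (hα : IsIntegral ℤ α) (hn : α ∈ ℚ⟮α ^ n⟯) :
    (minpoly ℤ (α ^ n)).natDegree = (minpoly ℤ α).natDegree := by
  have hfield : ℚ⟮α ^ n⟯ = ℚ⟮α⟯ := le_antisymm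
    (IntermediateField.adjoin_simple_le_iff.2
    (pow_mem (IntermediateField.mem_adjoin_simple_self ℚ α) n))
    (IntermediateField.adjoin_simple_le_iff.2 hn)
  rw [natDegree_minpoly_eq_finrank hα, natDegree_minpoly_eq_finrank (hα.pow n), hfield]

-- Writing `α` as a polynomial in `α ^ n`, the same polynomial recovers `x` from `x ^ n` for every
-- conjugate `x` of `α`.
lemma injOn_pow_complexRoots_minpoly (hα : IsIntegral ℤ α) (hn : α ∈ ℚ⟮α ^ n⟯) :
    Set.InjOn (fun x : ℂ => x ^ n) (complexRoots (minpoly ℤ α)) := by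
  have hαℚ : IsIntegral ℚ α := hα.tower_top
  obtain ⟨r, hr⟩ : ∃ r : ℚ[X], aeval (α ^ n) r = α := by
    rwa [← IntermediateField.mem_toSubalgebra,
      IntermediateField.adjoin_simple_toSubalgebra_of_isAlgebraic (hαℚ.pow n).isAlgebraic,
      Algebra.adjoin_singleton_eq_range_aeval] at hn
  have hdvd : minpoly ℚ α ∣ r.comp (X ^ n) - X :=
    minpoly.dvd ℚ α (by simp [aeval_comp, hr])
  have hinv : ∀ x ∈ complexRoots (minpoly ℤ α), aeval (x ^ n) r = x := by
    intro x hx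
    rw [mem_complexRoots (minpoly.monic hα)] at hx
    have hx' : aeval x (minpoly ℚ α) = 0 := by
      rwa [minpoly.isIntegrallyClosed_eq_field_fractions' ℚ hα, aeval_map_algebraMap]
    simpa [aeval_comp, sub_eq_zero] using aeval_eq_zero_of_dvd_aeval_eq_zero hdvd hx'
  intro x hx y hy (hxy : x ^ n = y ^ n)
  rw [← hinv x hx, ← hinv y hy, hxy]

lemma complexRoots_minpoly_pow (hα : IsIntegral ℤ α) (hn : α ∈ ℚ⟮α ^ n⟯) :
    complexRoots (minpoly ℤ (α ^ n)) = (complexRoots (minpoly ℤ α)).image (· ^ n) := by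
  symm
  refine eq_of_subset_of_card_le
    (image_subset_iff.2 fun x hx => pow_mem_complexRoots_minpoly_pow hα n hx) ?_
  rw [card_image_of_injOn (injOn_pow_complexRoots_minpoly hα hn),
    card_complexRoots (minpoly.monic hα) (minpoly.irreducible hα),
    card_complexRoots (minpoly.monic (hα.pow n)) (minpoly.irreducible (hα.pow n)),
    natDegree_minpoly_pow hα hn]

lemma sum_complexRoots_minpoly_pow (hα : IsIntegral ℤ α) (hn : α ∈ ℚ⟮α ^ n⟯) (φ : ℂ → ℝ) :
    ∑ y ∈ complexRoots (minpoly ℤ (α ^ n)), φ y =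
      ∑ x ∈ complexRoots (minpoly ℤ α), φ (x ^ n) := by
  rw [complexRoots_minpoly_pow hα hn, sum_image (injOn_pow_complexRoots_minpoly hα hn)]

lemma logMahler_minpoly_pow (hα : IsIntegral ℤ α) (hn : α ∈ ℚ⟮α ^ n⟯) :
    logMahler (minpoly ℤ (α ^ n)) =
      n * logMahler (minpoly ℤ α) := by
  rw [logMahler_eq_sum_complexRoots (minpoly.monic hα) (minpoly.irreducible hα),
    logMahler_eq_sum_complexRoots (minpoly.monic (hα.pow n)) (minpoly.irreducible (hα.pow n)),
    sum_complexRoots_minpoly_pow hα hn, mul_sum]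
  exact sum_congr rfl fun x _ => by rw [norm_pow, posLog_pow]

lemma logMahler_minpoly_pos (hα : IsIntegral ℤ α) (h0 : α ≠ 0)
    (hunity : ¬ ∃ m : ℕ, 0 < m ∧ α ^ m = 1) :
    0 < logMahler (minpoly ℤ α) := by
  have hne := (minpoly.monic hα).ne_zero
  rw [logMahler, logMahlerMeasure_eq_log_MahlerMeasure]
  refine log_pos ((one_le_mahlerMeasure_of_ne_zero hne).lt_of_ne fun h1 => hunity ?_)
  exact pow_eq_one_of_mahlerMeasure_eq_one h1.symm h0 (mem_aroots.2 ⟨hne, minpoly.aeval ℤ α⟩)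

theorem natDegree_mul_log_le_logResultant (hα : IsIntegral ℤ α) {p : ℕ} (hp : p.Prime)
    (hgood : α ∈ ℚ⟮α ^ p⟯) (hne : minpoly ℤ (α ^ p) ≠ minpoly ℤ α) :
    (minpoly ℤ α).natDegree * log p ≤ logResultant (minpoly ℤ (α ^ p)) (minpoly ℤ α) := by
  have hdisj := disjoint_complexRoots (minpoly.monic (hα.pow p)) (minpoly.irreducible (hα.pow p))
    (minpoly.monic hα) (minpoly.irreducible hα) hne
  rw [logResultant_eq_sum_log_norm_aeval (minpoly.monic (hα.pow p))
      (minpoly.irreducible (hα.pow p)) (minpoly.monic hα) (minpoly.irreducible hα) hne,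
    sum_complexRoots_minpoly_pow hα hgood fun y => log ‖aeval y (minpoly ℤ α)‖]
  refine natDegree_mul_log_le_sum_log_norm_aeval_pow (minpoly.monic hα) (minpoly.irreducible hα) hp
    fun x hx h0 => ?_
  exact disjoint_left.1 hdisj (pow_mem_complexRoots_minpoly_pow hα p hx)
    ((mem_complexRoots (minpoly.monic hα)).2 h0)

lemma injOn_minpoly_pow (hα : IsIntegral ℤ α) (h0 : α ≠ 0)
    (hunity : ¬ ∃ m : ℕ, 0 < m ∧ α ^ m = 1) :
    Set.InjOn (fun n : ℕ => minpoly ℤ (α ^ n)) {n | α ∈ ℚ⟮α ^ n⟯} := by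
  intro m hm n hn (hmn : minpoly ℤ (α ^ m) = minpoly ℤ (α ^ n))
  have hlog := congrArg logMahler hmn
  rw [logMahler_minpoly_pow hα hm, logMahler_minpoly_pow hα hn] at hlog
  exact_mod_cast mul_right_cancel₀ (logMahler_minpoly_pos hα h0 hunity).ne' hlog

theorem cantor_straus_inequality (hα : IsIntegral ℤ α) (h0 : α ≠ 0)
    (hunity : ¬ ∃ m : ℕ, 0 < m ∧ α ^ m = 1) {S : Finset ℕ} (hprime : ∀ p ∈ S, p.Prime)
    (hgood : ∀ p ∈ S, α ∈ ℚ⟮α ^ p⟯) (T : ℕ) :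
    T * ∑ p ∈ S, log p ≤ (T ^ 2 + #S) * log ((T + #S) * (minpoly ℤ α).natDegree : ℕ) +
      (T + #S) * ((T + ∑ p ∈ S, (p : ℝ)) * logMahler (minpoly ℤ α)) := by
  let ν : Option S → ℕ := fun a => a.elim 1 (↑)
  have hν : Function.Injective ν := by
    rintro (_ | p) (_ | q) hpq
    · rfl
    · exact absurd hpq (hprime q q.2).ne_one.symm
    · exact absurd hpq (hprime p p.2).ne_one
    · exact congrArg some (Subtype.ext hpq)
  have hνgood : ∀ a, α ∈ ℚ⟮α ^ ν a⟯ := by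
    rintro (_ | p)
    · simpa [ν] using IntermediateField.mem_adjoin_simple_self ℚ α
    · exact hgood p p.2
  have hinj : Function.Injective fun a => minpoly ℤ (α ^ ν a) := fun a b hab =>
    hν (injOn_minpoly_pow hα h0 hunity (hνgood a) (hνgood b) hab)
  have hd : (0 : ℝ) < (minpoly ℤ α).natDegree := mod_cast minpoly.natDegree_pos hα
  have hupper := mul_sum_logResultant_none_le hinj (fun a => minpoly.monic (hα.pow (ν a)))
    (fun a => minpoly.irreducible (hα.pow (ν a)))
    (fun a => natDegree_minpoly_pow hα (hνgood a)) T
  have hlower : (minpoly ℤ α).natDegree * ∑ p ∈ S, log p ≤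
      ∑ p : S, logResultant (minpoly ℤ (α ^ ν (some p))) (minpoly ℤ (α ^ ν none)) := by
    rw [mul_sum, ← sum_coe_sort S]
    gcongr with p
    have hne : minpoly ℤ (α ^ (p : ℕ)) ≠ minpoly ℤ (α ^ 1) := hinj.ne (Option.some_ne_none p)
    rw [pow_one] at hne
    simpa [ν] using natDegree_mul_log_le_logResultant hα (hprime p p.2) (hgood p p.2) hne
  refine le_of_mul_le_mul_left ?_ hd
  rw [mul_left_comm]
  refine (mul_le_mul_of_nonneg_left hlower T.cast_nonneg).trans (hupper.trans_eq ?_)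
  simp only [logMahler_minpoly_pow hα (hνgood _), ← sum_mul, Fintype.card_coe]
  simp only [ν, Option.elim, sum_coe_sort S (fun p => (p : ℝ)), Nat.cast_one, one_mul, add_mul]

end Powers

section ExceptionalPrimes

open Module

variable {K L : Type*} [Field K] [Field L] [Algebra K L] {α : L}

lemma mem_adjoin_pow_of_coprime (h0 : α ≠ 0) {n p : ℕ} (hnp : n.Coprime p)
    (hn : α ^ n ∈ K⟮(α ^ n) ^ p⟯) : α ∈ K⟮α ^ p⟯ := by
  have hαp : α ^ p ∈ K⟮α ^ p⟯ := IntermediateField.mem_adjoin_simple_self K _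
  have hαn : α ^ n ∈ K⟮α ^ p⟯ := by
    refine IntermediateField.adjoin_simple_le_iff.2 ?_ hn
    rw [pow_right_comm]
    exact pow_mem hαp n
  have hbezout : (α ^ n) ^ n.gcdA p * (α ^ p) ^ n.gcdB p = α := by
    rw [← zpow_natCast, ← zpow_natCast, ← zpow_mul, ← zpow_mul, ← zpow_add₀ h0,
      ← Nat.gcd_eq_gcd_ab, hnp.gcd_eq_one, Nat.cast_one, zpow_one]
  have hmem := mul_mem (zpow_mem hαn (n.gcdA p)) (zpow_mem hαp (n.gcdB p))
  rwa [hbezout] at hmem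

lemma two_mul_finrank_adjoin_pow_le (h : IsIntegral K α) {p : ℕ} (hp : α ∉ K⟮α ^ p⟯) :
    2 * finrank K K⟮α ^ p⟯ ≤ finrank K K⟮α⟯ := by
  have hle : K⟮α ^ p⟯ ≤ K⟮α⟯ := IntermediateField.adjoin_simple_le_iff.2
    (pow_mem (IntermediateField.mem_adjoin_simple_self K α) p)
  have := IntermediateField.adjoin.finiteDimensional h
  have hmul := IntermediateField.finrank_bot_mul_relfinrank hle
  have hone : IntermediateField.relfinrank K⟮α ^ p⟯ K⟮α⟯ ≠ 1 := fun h1 =>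
    hp (IntermediateField.relfinrank_eq_one_iff.1 h1 (IntermediateField.mem_adjoin_simple_self K α))
  have hzero : IntermediateField.relfinrank K⟮α ^ p⟯ K⟮α⟯ ≠ 0 := fun h0 =>
    finrank_pos.ne' (hmul.symm.trans (by rw [h0, mul_zero]))
  rw [← hmul, mul_comm]
  exact Nat.mul_le_mul_left _ (by lia)

theorem two_pow_card_mul_finrank_le (h : IsIntegral K α) (h0 : α ≠ 0) {B : Finset ℕ}
    (hprime : ∀ p ∈ B, p.Prime) (hB : ∀ p ∈ B, α ∉ K⟮α ^ p⟯) :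
    2 ^ #B * finrank K K⟮α ^ ∏ p ∈ B, p⟯ ≤ finrank K K⟮α⟯ := by
  classical
  induction B using Finset.induction_on with
  | empty => rw [card_empty, pow_zero, one_mul, prod_empty, pow_one]
  | insert p B hpB ih =>
    rw [forall_mem_insert] at hprime hB
    have hcoprime : (∏ q ∈ B, q).Coprime p := Nat.Coprime.prod_left fun q hq =>
      (Nat.coprime_primes (hprime.2 q hq) hprime.1).2 (ne_of_mem_of_not_mem hq hpB)
    have hhalf := two_mul_finrank_adjoin_pow_le (h.pow (∏ q ∈ B, q))
      (mt (mem_adjoin_pow_of_coprime h0 hcoprime) hB.1)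
    rw [card_insert_of_notMem hpB, prod_insert hpB, mul_comm p, pow_mul α, pow_succ, mul_assoc]
    exact (Nat.mul_le_mul_left _ hhalf).trans (ih hprime.2 hB.2)

theorem two_pow_card_le_finrank (h : IsIntegral K α) (h0 : α ≠ 0) {B : Finset ℕ}
    (hprime : ∀ p ∈ B, p.Prime) (hB : ∀ p ∈ B, α ∉ K⟮α ^ p⟯) :
    2 ^ #B ≤ finrank K K⟮α⟯ := by
  have := IntermediateField.adjoin.finiteDimensional (h.pow (∏ p ∈ B, p))
  exact (Nat.le_mul_of_pos_right _ finrank_pos).trans (two_pow_card_mul_finrank_le h h0 hprime hB)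

end ExceptionalPrimes

section Primes

open Filter Chebyshev

lemma eventually_div_four_le_theta : ∀ᶠ x : ℝ in atTop, x / 4 ≤ θ x := by
  filter_upwards [(isLittleO_log_rpow_atTop (r := 1 / 2) (by norm_num)).bound
    (show (0 : ℝ) < 1 / 100 by norm_num), eventually_ge_atTop 100] with x hlog hx
  rw [← sqrt_eq_rpow, norm_of_nonneg (log_nonneg (by linarith)), norm_of_nonneg (sqrt_nonneg x)]
    at hlog
  have hsqrt_mul_log : √x * log x ≤ 1 / 100 * x := by
    calc √x * log x ≤ √x * (1 / 100 * √x) := by gcongr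
      _ = 1 / 100 * x := by rw [mul_left_comm, mul_self_sqrt (by linarith)]
  have hlog_add_two : log (x + 2) ≤ x / 100 + log 2 := by
    have hsqrt : √x ≤ x := sqrt_le_self_iff.2 (Or.inr (by linarith))
    calc log (x + 2) ≤ log (x * 2) := log_le_log (by linarith) (by linarith)
      _ = log x + log 2 := log_mul (by linarith) two_ne_zero
      _ ≤ x / 100 + log 2 := by linarith
  have hmain : (x - 1) * 0.69 ≤ (x - 1) * log 2 := by
    have := log_two_gt_d9
    gcongr <;> linarith
  linarith [theta_ge' (show 1 ≤ x by linarith), log_two_lt_d9]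

lemma eventually_primeCounting_le_two_mul :
    ∀ᶠ x : ℝ in atTop, (Nat.primeCounting ⌊x⌋₊ : ℝ) ≤ 2 * x / log x := by
  filter_upwards [eventually_primeCounting_le (ε := 1 / 2) (by norm_num),
    eventually_gt_atTop 1] with x hx hx1
  have hlog4 : log 4 + 1 / 2 ≤ 2 := by
    rw [show (4 : ℝ) = 2 ^ 2 by norm_num, log_pow]
    push_cast
    linarith [log_two_lt_d9]
  have hlog : 0 < log x := log_pos hx1
  exact hx.trans (by gcongr)

lemma tendsto_sq_mul_log_atTop : Tendsto (fun t : ℝ => t ^ 2 * log t) atTop atTop :=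
  (tendsto_pow_atTop two_ne_zero).atTop_mul_atTop₀ tendsto_log_atTop

lemma eventually_primeCounting_sq_mul_log_le :
    ∀ᶠ t : ℝ in atTop, (Nat.primeCounting ⌊t ^ 2 * log t⌋₊ : ℝ) ≤ t ^ 2 := by
  filter_upwards [tendsto_sq_mul_log_atTop.eventually eventually_primeCounting_le_two_mul,
    eventually_gt_atTop 0, tendsto_log_atTop.eventually_ge_atTop 1] with t ht ht0 hlog
  have hlog_le : 2 * log t ≤ log (t ^ 2 * log t) := by
    rw [log_mul (by positivity) (by positivity), log_pow, Nat.cast_two]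
    exact le_add_of_nonneg_right (log_nonneg hlog)
  calc (Nat.primeCounting ⌊t ^ 2 * log t⌋₊ : ℝ)
      ≤ 2 * (t ^ 2 * log t) / log (t ^ 2 * log t) := ht
    _ ≤ 2 * (t ^ 2 * log t) / (2 * log t) := by gcongr
    _ = t ^ 2 := by field_simp

lemma log_sq_mul_log_le {t : ℝ} (ht : 0 < t) (hlog : 0 < log t) :
    log (t ^ 2 * log t) ≤ 3 * log t := by
  calc log (t ^ 2 * log t) ≤ log (t ^ 2 * t) :=
        log_le_log (by positivity) (by gcongr; exact log_le_self ht.le)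
    _ = 3 * log t := by rw [← pow_succ, log_pow]; norm_num

end Primes

section GoodPrimes

variable {α : ℂ}

open Classical in
lemma card_filter_notMem_adjoin_pow_le (hα : IsIntegral ℤ α) (h0 : α ≠ 0) {P : Finset ℕ}
    (hP : ∀ p ∈ P, p.Prime) :
    (#{p ∈ P | α ∉ ℚ⟮α ^ p⟯} : ℝ) ≤ 2 * log (minpoly ℤ α).natDegree := by
  have hpow : 2 ^ #{p ∈ P | α ∉ ℚ⟮α ^ p⟯} ≤ (minpoly ℤ α).natDegree := by
    rw [natDegree_minpoly_eq_finrank hα]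
    exact two_pow_card_le_finrank hα.tower_top h0 (fun p hp => hP p (mem_filter.1 hp).1)
      fun p hp => (mem_filter.1 hp).2
  have hlog : #{p ∈ P | α ∉ ℚ⟮α ^ p⟯} * log 2 ≤ log (minpoly ℤ α).natDegree := by
    rw [← log_pow]
    exact log_le_log (by positivity) (mod_cast hpow)
  have hhalf : (#{p ∈ P | α ∉ ℚ⟮α ^ p⟯} : ℝ) * (1 / 2) ≤ #{p ∈ P | α ∉ ℚ⟮α ^ p⟯} * log 2 := by
    gcongr
    linarith [log_two_gt_d9]
  linarith

open Classical in
lemma theta_sub_le_sum_log_filter_mem_adjoin_pow (hα : IsIntegral ℤ α) (h0 : α ≠ 0) {x : ℝ}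
    (hx : 1 ≤ x) :
    Chebyshev.theta x - 2 * log (minpoly ℤ α).natDegree * log x ≤
      ∑ p ∈ Nat.primesLE ⌊x⌋₊ with α ∈ ℚ⟮α ^ p⟯, log p := by
  have hlost : ∑ p ∈ Nat.primesLE ⌊x⌋₊ with α ∉ ℚ⟮α ^ p⟯, log p ≤
      2 * log (minpoly ℤ α).natDegree * log x := by
    calc ∑ p ∈ Nat.primesLE ⌊x⌋₊ with α ∉ ℚ⟮α ^ p⟯, log p
        ≤ #{p ∈ Nat.primesLE ⌊x⌋₊ | α ∉ ℚ⟮α ^ p⟯} * log x := by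
          rw [← nsmul_eq_mul]
          refine sum_le_card_nsmul _ _ _ fun p hp => ?_
          have hp := (mem_filter.1 hp).1
          exact log_le_log (mod_cast (Nat.prime_of_mem_primesLE hp).pos)
            ((Nat.cast_le.2 (Nat.le_of_mem_primesLE hp)).trans (Nat.floor_le (by linarith)))
      _ ≤ 2 * log (minpoly ℤ α).natDegree * log x := by
          gcongr
          · exact log_nonneg hx
          · exact card_filter_notMem_adjoin_pow_le hα h0 fun p hp => Nat.prime_of_mem_primesLE hp
  rw [Chebyshev.theta_eq_sum_primesLE, ← sum_filter_add_sum_filter_not _ (α ∈ ℚ⟮α ^ ·⟯)]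
  linarith

open Classical in
lemma sq_mul_log_div_eight_le_sum_log (hα : IsIntegral ℤ α) (h0 : α ≠ 0) {t : ℝ} (ht : 1 ≤ t)
    (hlog : 1 ≤ log t) (hd : 64 * log (minpoly ℤ α).natDegree ≤ t * log t)
    (hθ : t ^ 2 * log t / 4 ≤ Chebyshev.theta (t ^ 2 * log t)) :
    t ^ 2 * log t / 8 ≤ ∑ p ∈ Nat.primesLE ⌊t ^ 2 * log t⌋₊ with α ∈ ℚ⟮α ^ p⟯, log p := by
  have hx : 1 ≤ t ^ 2 * log t := one_le_mul_of_one_le_of_one_le (one_le_pow₀ ht) hlog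
  have hlost : 2 * log (minpoly ℤ α).natDegree * log (t ^ 2 * log t) ≤ t ^ 2 * log t / 8 := by
    calc 2 * log (minpoly ℤ α).natDegree * log (t ^ 2 * log t)
        ≤ 2 * (t * log t / 64) * (3 * log t) := by
          gcongr
          · exact log_nonneg hx
          · linarith
          · exact log_sq_mul_log_le (by linarith) (by linarith)
      _ = 3 / 32 * (t * log t) * log t := by ring
      _ ≤ 3 / 32 * (t * log t) * t := by
          gcongr
          exact log_le_self (by linarith)
      _ ≤ t ^ 2 * log t / 8 := by linarith [mul_nonneg (sq_nonneg t) (zero_le_one.trans hlog)]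
  linarith [theta_sub_le_sum_log_filter_mem_adjoin_pow hα h0 hx]

end GoodPrimes

section LowerBound

open Filter

lemma one_div_le_of_cantor_straus {t s L P D m : ℝ} (ht : 192 ≤ t) (hlog : 1 ≤ log t)
    (hs0 : 0 ≤ s) (hs : s ≤ t ^ 2) (hL : t ^ 2 * log t / 8 ≤ L) (hP0 : 0 ≤ P)
    (hP : P ≤ t ^ 4 * log t) (hD : 1 ≤ D) (hlogD : 64 * log D ≤ t * log t) (hm : 0 ≤ m)
    (h : t * L ≤ (t ^ 2 + s) * log ((t + s) * D) + (t + s) * ((t + P) * m)) :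
    1 / (64 * t ^ 3) ≤ m := by
  have : 0 < t := by linarith
  have hts : t + s ≤ 2 * t ^ 2 := by nlinarith
  have hlog_le : log ((t + s) * D) ≤ t * log t / 32 := by
    have hlog_add : log (t + s) ≤ 3 * log t := by
      rw [← Nat.cast_ofNat (n := 3), ← log_pow]
      exact log_le_log (by positivity) (by nlinarith [sq_nonneg t])
    rw [log_mul (by positivity) (by positivity)]
    nlinarith
  have htP : t + P ≤ 2 * (t ^ 4 * log t) := by
    have : t * 1 ≤ t ^ 4 * log t := by
      gcongr
      exact le_self_pow₀ (by linarith) (by norm_num)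
    linarith
  have hmain : t ^ 3 * log t * (1 / 8) ≤ t ^ 3 * log t * (1 / 16 + 4 * t ^ 3 * m) := by
    calc t ^ 3 * log t * (1 / 8) = t * (t ^ 2 * log t / 8) := by ring
      _ ≤ t * L := by gcongr
      _ ≤ (t ^ 2 + s) * log ((t + s) * D) + (t + s) * ((t + P) * m) := h
      _ ≤ (t ^ 2 + t ^ 2) * (t * log t / 32) + 2 * t ^ 2 * (2 * (t ^ 4 * log t) * m) := by
        gcongr
        exact log_nonneg (one_le_mul_of_one_le_of_one_le (by linarith) hD)
      _ = t ^ 3 * log t * (1 / 16 + 4 * t ^ 3 * m) := by ring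
  rw [div_le_iff₀ (by positivity)]
  linarith [le_of_mul_le_mul_left hmain (by positivity)]

theorem eventually_one_div_le_logMahler : ∀ᶠ T : ℕ in atTop, ∀ α : ℂ, IsIntegral ℤ α → α ≠ 0 →
    (¬ ∃ m : ℕ, 0 < m ∧ α ^ m = 1) → 64 * log (minpoly ℤ α).natDegree ≤ T * log T →
    1 / (64 * (T : ℝ) ^ 3) ≤ logMahler (minpoly ℤ α) := by
  classical
  filter_upwards [tendsto_natCast_atTop_atTop.eventually eventually_primeCounting_sq_mul_log_le,
    (tendsto_sq_mul_log_atTop.comp tendsto_natCast_atTop_atTop).eventually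
      eventually_div_four_le_theta,
    (tendsto_log_atTop.comp tendsto_natCast_atTop_atTop).eventually_ge_atTop 1,
    tendsto_natCast_atTop_atTop.eventually_ge_atTop (192 : ℝ)]
    with T hπ hθ hlog hT α hα h0 hunity hd
  set x : ℝ := T ^ 2 * log T with hx
  have hx0 : 0 ≤ x := mul_nonneg (sq_nonneg _) (zero_le_one.trans hlog)
  set S := {p ∈ Nat.primesLE ⌊x⌋₊ | α ∈ ℚ⟮α ^ p⟯}
  have hcard : (#S : ℝ) ≤ T ^ 2 := by
    refine le_trans ?_ hπ
    rw [← Nat.primesLE_card_eq_primeCounting]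
    exact_mod_cast card_filter_le _ _
  have hsum : ∑ p ∈ S, (p : ℝ) ≤ T ^ 4 * log T := by
    calc ∑ p ∈ S, (p : ℝ) ≤ #S • x := sum_le_card_nsmul _ _ _ fun p hp =>
          (Nat.cast_le.2 (Nat.le_of_mem_primesLE (mem_filter.1 hp).1)).trans
            (Nat.floor_le hx0)
      _ = #S * x := nsmul_eq_mul _ _
      _ ≤ T ^ 2 * x := by gcongr
      _ = T ^ 4 * log T := by rw [hx]; ring
  have hCS := cantor_straus_inequality hα h0 hunity (S := S)
    (fun p hp => Nat.prime_of_mem_primesLE (mem_filter.1 hp).1) (fun p hp => (mem_filter.1 hp).2) T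
  push_cast at hCS
  exact one_div_le_of_cantor_straus hT hlog (Nat.cast_nonneg _) hcard
    (sq_mul_log_div_eight_le_sum_log hα h0 (by linarith) hlog hd hθ)
    (sum_nonneg fun _ _ => Nat.cast_nonneg _) hsum (mod_cast minpoly.natDegree_pos hα) hd
    (logMahler_minpoly_pos hα h0 hunity).le hCS

lemma exists_nat_le_mul_log {A : ℝ} (hA : 128 ≤ A) {u : ℝ} (hu : 1 < u) :
    ∃ T : ℕ, A ≤ T ∧ 64 * u ≤ T * log T ∧ T ≤ (A + 1) * (u / log u) := by
  have hw : 0 < log u := log_pos hu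
  have hr : 1 ≤ u / log u := (one_le_div hw).2 (log_le_self (by linarith))
  have hceil := Nat.le_ceil (A * (u / log u))
  have hAT : A ≤ ⌈A * (u / log u)⌉₊ := (le_mul_of_one_le_right (by linarith) hr).trans hceil
  refine ⟨⌈A * (u / log u)⌉₊, hAT, ?_, ?_⟩
  · have hloglog : log (log u) ≤ log u / 2 := by
      have h := log_le_sub_one_of_pos (half_pos hw)
      rw [log_div hw.ne' two_ne_zero] at h
      linarith [log_two_lt_d9]
    have hlog : log u / 2 ≤ log ⌈A * (u / log u)⌉₊ := by
      calc log u / 2 ≤ log (u / log u) := by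
            rw [log_div (by positivity) hw.ne']
            linarith
        _ ≤ log ⌈A * (u / log u)⌉₊ := log_le_log (by positivity) (by nlinarith)
    calc 64 * u = 128 * (u / log u) * (log u / 2) := by field_simp; norm_num
      _ ≤ A * (u / log u) * log ⌈A * (u / log u)⌉₊ := by gcongr
      _ ≤ _ := by gcongr
  · linarith [(Nat.ceil_lt_add_one (show 0 ≤ A * (u / log u) by positivity)).le]

lemma log_prod_roots_max_one_norm {f : ℤ[X]} (hf : f.Monic) :
    log ((f.map (Int.castRingHom ℂ)).roots.map fun z => max 1 ‖z‖).prod = logMahler f := by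
  rw [logMahler, logMahlerMeasure_eq_log_MahlerMeasure,
    mahlerMeasure_eq_leadingCoeff_mul_prod_roots, (hf.map _).leadingCoeff, norm_one, one_mul]

theorem exists_mul_pow_le_logMahler : ∃ c : ℝ, 0 < c ∧ ∀ α : ℂ, IsIntegral ℤ α → α ≠ 0 →
    (¬ ∃ m : ℕ, 0 < m ∧ α ^ m = 1) → 3 ≤ (minpoly ℤ α).natDegree →
    c * (log (log (minpoly ℤ α).natDegree) / log (minpoly ℤ α).natDegree) ^ 3 ≤
      logMahler (minpoly ℤ α) := by
  obtain ⟨T₀, hT₀⟩ := Filter.eventually_atTop.1 eventually_one_div_le_logMahler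
  set A : ℝ := max 128 T₀
  have hA : 0 < A := by positivity
  refine ⟨1 / (64 * (A + 1) ^ 3), by positivity, fun α hα h0 hunity hd => ?_⟩
  have hu : 1 < log (minpoly ℤ α).natDegree := by
    rw [lt_log_iff_exp_lt (by positivity)]
    exact exp_one_lt_three.trans_le (mod_cast hd)
  have hw := log_pos hu
  obtain ⟨T, hAT, hlogT, hT⟩ := exists_nat_le_mul_log (le_max_left _ _) hu
  have hT0 : (0 : ℝ) < T := hA.trans_le hAT
  have hT₀T : (T₀ : ℝ) ≤ T := (le_max_right _ _).trans hAT
  refine le_trans ?_ (hT₀ T (mod_cast hT₀T) α hα h0 hunity hlogT)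
  set u := log (minpoly ℤ α).natDegree
  calc 1 / (64 * (A + 1) ^ 3) * (log u / u) ^ 3 = 1 / (64 * ((A + 1) * (u / log u)) ^ 3) := by
        field_simp
    _ ≤ 1 / (64 * (T : ℝ) ^ 3) := by gcongr

end LowerBound

end Dobrowolski

/-- **Dobrowolski's theorem.** There is a constant `c > 0` such that every
nonzero algebraic integer `θ` of degree `d ≥ 3` (root of a monic irreducible
`f ∈ ℤ[X]` of degree `d`) which is not a root of unity satisfies
`M(θ) ≥ 1 + c (log log d / log d)³`, where
`M(θ) = ∏ max(1, |θ_i|)` over the complex roots `θ_i` of `f`. -/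
theorem dobrowolski_lehmer :
    ∃ c : ℝ, 0 < c ∧
      ∀ (d : ℕ), 3 ≤ d →
        ∀ f : Polynomial ℤ, f.Monic → Irreducible f → f.natDegree = d →
          ∀ θ : ℂ, θ ≠ 0 → Polynomial.aeval θ f = 0 →
            (¬ ∃ m : ℕ, 0 < m ∧ θ ^ m = 1) →
            1 + c * (Real.log (Real.log d) / Real.log d) ^ 3 ≤
              (((f.map (Int.castRingHom ℂ)).roots.map
                fun z => max 1 ‖z‖).prod) := by
  obtain ⟨c, hc, h⟩ := Dobrowolski.exists_mul_pow_le_logMahler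
  refine ⟨c, hc, ?_⟩
  rintro d hd f hf hirr rfl θ hθ0 hθ hunity
  obtain rfl : minpoly ℤ θ = f := Dobrowolski.minpoly_eq_of_mem_complexRoots hf hirr
    ((Dobrowolski.mem_complexRoots hf).2 hθ)
  have hM := h θ ⟨_, hf, hθ⟩ hθ0 hunity hd
  rw [← Dobrowolski.log_prod_roots_max_one_norm hf] at hM
  have hpos : 0 < (((minpoly ℤ θ).map (Int.castRingHom ℂ)).roots.map
      fun z => max 1 ‖z‖).prod :=
    Multiset.prod_pos fun x hx => by
      obtain ⟨z, -, rfl⟩ := Multiset.mem_map.1 hx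
      exact lt_max_of_lt_left one_pos
  linarith [Real.log_le_sub_one_of_pos hpos]
end
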